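/- There are only finitely many unit-generated real quadratic orders whose (wide) class group is 2-torsion. Equivalently, the set of integers n ≥ 3 such that every element of Cl(O_{n²−4}) has order dividing 2, together with the set of integers n ≥ 1 such that every element of Cl(O_{n²+4}) has order dividing 2, is finite. -/

import Mathlib

/-!
Write `d = n ^ 2 ± 4`. The order of discriminant `d` is `ℤ[ω]` with `ω` a unit of trace `n`. Suppose
that its class group is `2`-torsion, and let `s > 1` be squarefree, coprime to `2 * d`, with `d` a
square modulo every prime divisor of `s`. Then `(s)` is a product of two conjugate ideals, whose
squares are principal, so `s ^ 2 = |N z|` for some `z = x + y * ω` with `y ≠ 0`. Multiplying `z` by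
powers of `ω` achieves `(n - 2) * y ^ 2 ≤ s ^ 2`. Since `4 * N z = (tr z) ^ 2 - d * y ^ 2`, each `y`
occurs for few `s` by the divisor bound. Hence the coefficients of `L(s, 1) L(s, χ)`, `χ` the
quadratic character of `d`, live on the squares and on a sparse set.

For a Dirichlet series `F` with nonnegative coefficients, leading coefficient `1` and a simple pole
at `1`, Estermann's proof of Siegel's theorem shows that if `(s - 1) F(s)` is nonnegative at some
`β < 1` near `1`, then the Taylor coefficients of `F` at `2` cannot be small compared to `1 - β`.
Sparsity makes them small, so for `β` fixed and `n` large `(s - 1) F(s)` is negative at `β`, both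
for `F = L(s, 1) L(s, χ)` and for `F = L(s, 1) L(s, χ) L(s, ψ) L(s, χψ)` with a second quadratic
character `ψ`. As in Siegel's theorem, either no `(s - 1) L(s, 1) L(s, ψ)` is negative at
`β = 999 / 1000`, or one of them has a zero `β` in `(999 / 1000, 1)`, where the fourfold product
with that `ψ` then vanishes for every `χ`; both contradict negativity for large `n`.
-/

noncomputable section

/-- A complex square root of an integer `d`. -/
def sqrtD (d : ℤ) : ℂ :=
  if 0 ≤ d then ((Real.sqrt d : ℝ) : ℂ) else Complex.I * ((Real.sqrt (-d) : ℝ) : ℂ)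

/-- The element `(Δ + √Δ)/2` generating the quadratic order of discriminant `Δ`. -/
def omegaD (d : ℤ) : ℂ := ((d : ℂ) + sqrtD d) / 2

/-- The quadratic order `O_Δ = ℤ[(Δ + √Δ)/2]` of discriminant `Δ`, as a subring of `ℂ`. -/
def QOrder (d : ℤ) : Subring ℂ := Subring.closure {omegaD d}

/-- The class number `h_Δ`: the order of the (wide) class group of `O_Δ`,
the group of invertible fractional ideals modulo principal fractional ideals. -/
def classNumber (d : ℤ) : ℕ := Nat.card (ClassGroup (QOrder d))

section TwoTorsion

open Ideal nonZeroDivisors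

theorem exists_sq_eq_span_singleton {R : Type*} [CommRing R] [IsDomain R]
    (htor : ∀ g : ClassGroup R, g ^ 2 = 1) {I J : Ideal R} {s : R} (hs : s ≠ 0)
    (hIJ : I * J = span {s}) : ∃ α, I ^ 2 = span {α} := by
  let K := FractionRing R
  have hs' : algebraMap R K s ≠ 0 := by simpa using hs
  have hinv : (I : FractionalIdeal R⁰ K) * ((J : FractionalIdeal R⁰ K) *
      FractionalIdeal.spanSingleton R⁰ (algebraMap R K s)⁻¹) = 1 := by
    rw [← mul_assoc, ← FractionalIdeal.coeIdeal_mul, hIJ, FractionalIdeal.coeIdeal_span_singleton,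
      FractionalIdeal.spanSingleton_mul_spanSingleton, mul_inv_cancel₀ hs',
      FractionalIdeal.spanSingleton_one]
  let U : (FractionalIdeal R⁰ K)ˣ := Units.mkOfMulEqOne _ _ hinv
  have hU : ClassGroup.mk (K := K) (U ^ 2) = 1 := by rw [map_pow, htor]
  obtain ⟨α, -, hα⟩ := (ClassGroup.mk_eq_one_of_coe_ideal (I := U ^ 2) (I' := I ^ 2)
    (by simp [U, FractionalIdeal.coeIdeal_pow])).1 hU
  exact ⟨α, hα⟩

theorem span_pair_mul_span_pair_eq_span_singleton {R : Type*} [CommRing R] {s w w' : R}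
    (hdvd : s ∣ w * w') (hcop : IsCoprime s (w + w')) :
    span {s, w} * span {s, w'} = span {s} := by
  obtain ⟨c, hc⟩ := hdvd
  obtain ⟨x, y, hxy⟩ := hcop
  rw [span_pair_mul_span_pair]
  refine le_antisymm (span_le.2 ?_) ((span_singleton_le_iff_mem _).2 ?_)
  · simp [Set.insert_subset_iff, mem_span_singleton, hc]
  · have hs : x * (s * s) + y * (s * w') + y * (w * s) = s := by linear_combination s * hxy
    nth_rw 5 [← hs]
    exact add_mem (add_mem (mul_mem_left _ _ (subset_span (by simp)))
      (mul_mem_left _ _ (subset_span (by simp)))) (mul_mem_left _ _ (subset_span (by simp)))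

end TwoTorsion

section QuadraticOrder

open QuadraticAlgebra

theorem sqrtD_mul_self (d : ℤ) : sqrtD d * sqrtD d = d := by
  unfold sqrtD
  split_ifs with hd
  · rw [← Complex.ofReal_mul, Real.mul_self_sqrt (by exact_mod_cast hd), Complex.ofReal_intCast]
  · have hsqrt : Real.sqrt (-d) * Real.sqrt (-d) = -d :=
      Real.mul_self_sqrt (by exact_mod_cast (by lia : 0 ≤ -d))
    rw [mul_mul_mul_comm, Complex.I_mul_I, ← Complex.ofReal_mul, hsqrt]
    simp

theorem four_mul_norm {R : Type*} [CommRing R] {a b : R} (z : QuadraticAlgebra R a b) :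
    4 * norm z = trace z ^ 2 - (b ^ 2 + 4 * a) * z.im ^ 2 := by
  rw [norm_def, trace_def]
  ring

theorem quadraticAlgebra_norm_ne_zero {a b : ℤ} (hsq : ¬ IsSquare (b ^ 2 + 4 * a))
    {z : QuadraticAlgebra ℤ a b} (hz : z ≠ 0) : norm z ≠ 0 := by
  intro hnorm
  have hdisc : (b ^ 2 + 4 * a) * z.im ^ 2 = trace z ^ 2 := by
    linear_combination four_mul_norm z - 4 * hnorm
  have him : z.im = 0 := by
    by_contra him
    refine hsq (Rat.isSquare_intCast_iff.1 ⟨trace z / z.im, ?_⟩)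
    have him' : (z.im : ℚ) ≠ 0 := by exact_mod_cast him
    field_simp
    exact_mod_cast hdisc
  have hre : z.re = 0 := by
    rw [him, trace_def, him] at hdisc
    simpa using hdisc.symm
  exact hz (QuadraticAlgebra.ext hre him)

variable (a b : ℤ)

/-- The ring homomorphism from `ℤ[ω]`, where `ω ^ 2 = a + b * ω`, to `ℂ` sending `ω` to the root
`(b + √Δ) / 2`, where `Δ = b ^ 2 + 4 * a`. -/
def quadraticEmbedding : QuadraticAlgebra ℤ a b →ₐ[ℤ] ℂ :=
  lift ⟨(b + sqrtD (b ^ 2 + 4 * a)) / 2, by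
    have hsq := sqrtD_mul_self (b ^ 2 + 4 * a)
    push_cast at hsq
    simp only [zsmul_eq_mul, mul_one]
    linear_combination hsq / 4⟩

theorem quadraticEmbedding_apply (z : QuadraticAlgebra ℤ a b) :
    quadraticEmbedding a b z = z.re + z.im * ((b + sqrtD (b ^ 2 + 4 * a)) / 2) := by
  simp [quadraticEmbedding, lift]

theorem quadraticEmbedding_injective (hsq : ¬ IsSquare (b ^ 2 + 4 * a)) :
    Function.Injective (quadraticEmbedding a b) := by
  rw [injective_iff_map_eq_zero]
  intro z hz
  by_contra hne
  apply quadraticAlgebra_norm_ne_zero hsq hne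
  have hnorm := congrArg (quadraticEmbedding a b) (algebraMap_norm_eq_mul_star z)
  rw [map_mul, hz, zero_mul, AlgHom.commutes] at hnorm
  exact_mod_cast (eq_intCast (algebraMap ℤ ℂ) _).symm.trans hnorm

theorem quadraticEmbedding_range :
    (quadraticEmbedding a b).toRingHom.range = QOrder (b ^ 2 + 4 * a) := by
  set d := b ^ 2 + 4 * a with hd
  -- `b` and `Δ` have the same parity, so the two generators differ by an integer.
  obtain ⟨k, hk⟩ : (2 : ℤ) ∣ d - b := by
    rw [hd, show b ^ 2 + 4 * a - b = b * (b - 1) + 2 * (2 * a) by ring]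
    exact dvd_add (Int.even_mul_pred_self b).two_dvd (dvd_mul_right _ _)
  have hk' : omegaD d = (b + sqrtD d) / 2 + k := by
    have : (d : ℂ) - b = 2 * k := by exact_mod_cast hk
    rw [omegaD]
    linear_combination this / 2
  apply le_antisymm
  · rintro _ ⟨z, rfl⟩
    have hω : omegaD d - k ∈ QOrder d :=
      sub_mem (Subring.subset_closure rfl) (intCast_mem _ _)
    rw [hk', add_sub_cancel_right] at hω
    change quadraticEmbedding a b z ∈ _
    rw [quadraticEmbedding_apply]
    exact add_mem (intCast_mem _ _) (mul_mem (intCast_mem _ _) hω)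
  · rw [QOrder, Subring.closure_le, Set.singleton_subset_iff]
    refine ⟨⟨k, 1⟩, (quadraticEmbedding_apply a b _).trans ?_⟩
    rw [hk', hd]
    push_cast
    ring

/-- The order of nonsquare discriminant `b ^ 2 + 4 * a` is `ℤ[ω]` with `ω ^ 2 = a + b * ω`. -/
def quadraticAlgebraEquivQOrder (hsq : ¬ IsSquare (b ^ 2 + 4 * a)) :
    QuadraticAlgebra ℤ a b ≃+* QOrder (b ^ 2 + 4 * a) :=
  (RingEquiv.ofBijective (quadraticEmbedding a b).toRingHom.rangeRestrict
    ⟨fun _ _ h ↦ quadraticEmbedding_injective a b hsq (congrArg Subtype.val h),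
      RingHom.rangeRestrict_surjective _⟩).trans
    (RingEquiv.subringCongr (quadraticEmbedding_range a b))

end QuadraticOrder

section UnitGenerated

open QuadraticAlgebra Ideal

variable {a n : ℤ}

theorem not_isSquare_sq_add_four_mul (ha : IsUnit a) (hn : 3 ≤ n) :
    ¬ IsSquare (n ^ 2 + 4 * a) := by
  rw [isSquare_iff_exists_sq]
  rintro ⟨r, hr⟩
  rw [← sq_abs r] at hr
  have hr0 := abs_nonneg r
  rcases Int.isUnit_iff.1 ha with rfl | rfl
  · have : n < |r| := by nlinarith
    have : |r| < n + 1 := by nlinarith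
    omega
  · have : |r| < n := by nlinarith
    have : n - 1 < |r| := by nlinarith
    omega

theorem isUnit_omega (ha : IsUnit a) : IsUnit (omega : QuadraticAlgebra ℤ a n) := by
  rw [isUnit_iff_norm_isUnit]
  simpa [norm_def] using ha

theorem exists_span_singleton_eq_abs_im_le (α₀ : QuadraticAlgebra ℤ a n) :
    ∃ α, span {α} = span {α₀} ∧ ∀ ε, IsUnit ε → |α.im| ≤ |(α * ε).im| := by
  let s := {α : QuadraticAlgebra ℤ a n | span {α} = span {α₀}}
  have hmem := Function.argminOn_mem (fun α ↦ α.im.natAbs) s ⟨α₀, rfl⟩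
  refine ⟨_, hmem, fun ε hε ↦ ?_⟩
  rw [Int.abs_eq_natAbs, Int.abs_eq_natAbs, Nat.cast_le]
  exact Function.argminOn_le (fun α ↦ α.im.natAbs) s
    (Set.mem_ofPred.2 ((span_singleton_mul_right_unit hε _).trans hmem))

theorem sub_two_mul_sq_le_abs {x y : ℤ} (ha : IsUnit a) (hn : 1 ≤ n) (hx : |y| ≤ |x|)
    (hxy : |y| ≤ |x + n * y|) : (n - 2) * y ^ 2 ≤ |x * (x + n * y) - a * y ^ 2| := by
  wlog hy : 0 ≤ y generalizing x y
  · convert this (x := -x) (y := -y) (by simpa using hx) ?_ (by lia) using 1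
    · ring
    · ring_nf
    · rwa [abs_neg, mul_neg, ← neg_add, abs_neg]
  have hya : |a * y ^ 2| = y ^ 2 := by rw [abs_mul, Int.isUnit_iff_abs_eq.1 ha, one_mul, abs_sq]
  suffices h : (n - 1) * y ^ 2 ≤ |x * (x + n * y)| by
    have := abs_sub_abs_le_abs_sub (x * (x + n * y)) (a * y ^ 2)
    linarith
  rw [abs_of_nonneg hy] at hx hxy
  rcases le_abs.1 hx with hx | hx <;> rcases le_abs.1 hxy with hxy | hxy
  · refine le_abs.2 (Or.inl ?_)
    nlinarith
  · obtain rfl : y = 0 := by nlinarith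
    simp only [ne_eq, OfNat.ofNat_ne_zero, not_false_eq_true, zero_pow, mul_zero, abs_nonneg]
  · refine le_abs.2 (Or.inr ?_)
    nlinarith [mul_nonneg (sub_nonneg.2 hx) (sub_nonneg.2 hxy)]
  · refine le_abs.2 (Or.inl ?_)
    nlinarith [mul_nonneg (sub_nonneg.2 hx) (sub_nonneg.2 hxy)]

theorem sub_two_mul_im_sq_le_abs_norm (ha : IsUnit a) (hn : 1 ≤ n) {z : QuadraticAlgebra ℤ a n}
    (hω : |z.im| ≤ |(z * omega).im|) (hω' : |z.im| ≤ |(z * star omega).im|) :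
    (n - 2) * z.im ^ 2 ≤ |norm z| := by
  have hnorm : norm z = z.re * (z.re + n * z.im) - a * z.im ^ 2 := by
    rw [norm_def]
    ring
  rw [hnorm]
  exact sub_two_mul_sq_le_abs ha hn (by simpa [mul_comm] using hω') (by simpa using hω)

theorem abs_norm_eq_sq_of_sq_eq_span {b : ℤ} {s : ℤ} {w α : QuadraticAlgebra ℤ a b}
    (hmul : span {(s : QuadraticAlgebra ℤ a b), w} * span {(s : QuadraticAlgebra ℤ a b), star w} =
      span {(s : QuadraticAlgebra ℤ a b)})
    (hα : span {(s : QuadraticAlgebra ℤ a b), w} ^ 2 = span {α}) : |norm α| = s ^ 2 := by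
  have hconj : span {(s : QuadraticAlgebra ℤ a b), star w} ^ 2 = span {star α} := by
    have hmap := congrArg (Ideal.map (starRingEnd (QuadraticAlgebra ℤ a b))) hα
    rwa [Ideal.map_pow, map_span, map_span, Set.image_pair, Set.image_singleton, map_intCast,
      starRingEnd_apply, starRingEnd_apply] at hmap
  have hspan : span {(s : QuadraticAlgebra ℤ a b) ^ 2} = span {α * star α} := by
    rw [← span_singleton_pow, ← hmul, mul_pow, hα, hconj, span_singleton_mul_span_singleton]
  rw [← algebraMap_norm_eq_mul_star, ← Int.cast_pow,
    ← eq_intCast (algebraMap ℤ (QuadraticAlgebra ℤ a b))] at hspan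
  have hassoc : Associated (s ^ 2) (norm α) := by
    refine associated_of_dvd_dvd ((algebraMap_dvd_iff_dvd (a := a) (b := b)).1 ?_)
      ((algebraMap_dvd_iff_dvd (a := a) (b := b)).1 ?_) <;>
      rw [← span_singleton_le_span_singleton, hspan]
  rw [← abs_sq s]
  exact abs_eq_abs.2 (Int.associated_iff.1 hassoc.symm)

theorem im_ne_zero_of_sq_eq_span {s : ℤ} {w α : QuadraticAlgebra ℤ a n} (hs : 1 < s)
    (htr : IsCoprime s (trace w)) (him : IsCoprime s w.im)
    (hα : span {(s : QuadraticAlgebra ℤ a n), w} ^ 2 = span {α}) (hαs : |norm α| = s ^ 2) :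
    α.im ≠ 0 := by
  intro h0
  have hαre : α = algebraMap ℤ _ α.re := QuadraticAlgebra.ext rfl h0
  have hre : |α.re| = s := by
    rw [hαre, QuadraticAlgebra.norm_algebraMap, abs_sq] at hαs
    rw [← abs_of_pos (by lia : 0 < s)]
    exact sq_eq_sq_iff_abs_eq_abs _ _ |>.1 (by simpa using hαs)
  have hdvd : α ∣ w ^ 2 := by
    rw [← mem_span_singleton, ← hα]
    exact pow_mem_pow (subset_span (by simp)) 2
  have hsdvd : s ∣ trace w * w.im := by
    rw [hαre, algebraMap_dvd_iff, sq_eq_trace_smul_sub_norm] at hdvd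
    have := hdvd.2
    rw [← hre, abs_dvd]
    simpa using this
  exact absurd ((htr.mul_right him).isUnit_of_dvd' dvd_rfl hsdvd) (by rw [Int.isUnit_iff]; lia)

/-- The natural numbers `m` for which `m ^ 2` is, up to sign, the norm of some `z ∈ ℤ[ω] ∖ ℤ`,
where `ω ^ 2 = a + n * ω`, whose `ω`-coordinate satisfies the bound that can be achieved by
multiplying `z` with powers of the unit `ω`. -/
def reducedNormRoots (a n : ℤ) : Set ℕ :=
  {m | ∃ z : QuadraticAlgebra ℤ a n, z.im ≠ 0 ∧ |norm z| = m ^ 2 ∧ (n - 2) * z.im ^ 2 ≤ m ^ 2}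

theorem mul_mem_reducedNormRoots {m t : ℕ} (ht : t ≠ 0) (hm : m ∈ reducedNormRoots a n) :
    t * m ∈ reducedNormRoots a n := by
  obtain ⟨z, him, hnorm, hle⟩ := hm
  refine ⟨(t : ℤ) • z, by simp [ht, him], ?_, ?_⟩
  · rw [Algebra.smul_def, map_mul, QuadraticAlgebra.norm_algebraMap, abs_mul, hnorm]
    simp [mul_pow]
  · rw [im_smul, smul_eq_mul, mul_pow, Nat.cast_mul, mul_pow, mul_left_comm]
    gcongr

theorem mem_reducedNormRoots_of_dvd_norm (ha : IsUnit a) (hn : 3 ≤ n)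
    (htor : ∀ g : ClassGroup (QOrder (n ^ 2 + 4 * a)), g ^ 2 = 1) {s : ℕ} (hs : 1 < s)
    {w : QuadraticAlgebra ℤ a n} (hnorm : (s : ℤ) ∣ norm w) (him : IsCoprime (s : ℤ) w.im)
    (hdisc : IsCoprime (s : ℤ) (n ^ 2 + 4 * a)) : s ∈ reducedNormRoots a n := by
  let e := quadraticAlgebraEquivQOrder a n (not_isSquare_sq_add_four_mul ha hn)
  have : IsDomain (QuadraticAlgebra ℤ a n) := e.toMulEquiv.isDomain _
  have htor' (g : ClassGroup (QuadraticAlgebra ℤ a n)) : g ^ 2 = 1 :=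
    (ClassGroup.mulEquiv e).injective (by rw [map_pow, htor, map_one])
  have htr : IsCoprime (s : ℤ) (trace w) := by
    obtain ⟨c, hc⟩ := hnorm
    refine (IsCoprime.pow_right_iff (by lia : 0 < 2)).1 ?_
    have : trace w ^ 2 = (n ^ 2 + 4 * a) * w.im ^ 2 + s * (4 * c) := by
      linear_combination 4 * hc - four_mul_norm w
    rw [this]
    exact (hdisc.mul_right him.pow_right).add_mul_left_right _
  have hmul : span {((s : ℤ) : QuadraticAlgebra ℤ a n), w} *
      span {((s : ℤ) : QuadraticAlgebra ℤ a n), star w} =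
      span {((s : ℤ) : QuadraticAlgebra ℤ a n)} := by
    rw [← eq_intCast (algebraMap ℤ (QuadraticAlgebra ℤ a n))]
    refine span_pair_mul_span_pair_eq_span_singleton ?_ ?_
    · rw [← algebraMap_norm_eq_mul_star]
      exact map_dvd _ hnorm
    · rw [← algebraMap_trace_eq_add_star]
      exact htr.map _
  have hs0 : ((s : ℤ) : QuadraticAlgebra ℤ a n) ≠ 0 := by exact_mod_cast (by lia : s ≠ 0)
  obtain ⟨α₀, hα₀⟩ := exists_sq_eq_span_singleton htor' hs0 hmul
  obtain ⟨α, hα, hmin⟩ := exists_span_singleton_eq_abs_im_le α₀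
  rw [← hα] at hα₀
  have hαs := abs_norm_eq_sq_of_sq_eq_span hmul hα₀
  refine ⟨α, im_ne_zero_of_sq_eq_span (by lia) htr him hα₀ hαs, hαs, ?_⟩
  rw [← hαs]
  have hω := isUnit_omega (n := n) ha
  exact sub_two_mul_im_sq_le_abs_norm ha (by lia) (hmin _ hω) (hmin _ hω.star)

end UnitGenerated

section DivisorBound

open Real

theorem natCast_add_one_le_mul_pow {x : ℝ} (hx : 1 < x) (e : ℕ) :
    (e : ℝ) + 1 ≤ (1 + 1 / (x - 1)) * x ^ e := by
  have hx' : 0 < x - 1 := sub_pos.2 hx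
  calc (e : ℝ) + 1 ≤ (1 + 1 / (x - 1)) * (1 + e * (x - 1)) := by
        field_simp
        nlinarith [(Nat.cast_nonneg e : (0 : ℝ) ≤ e),
          mul_nonneg (Nat.cast_nonneg (α := ℝ) e) (sq_nonneg (x - 1))]
    _ ≤ (1 + 1 / (x - 1)) * x ^ e := by
        gcongr
        exact one_add_mul_sub_le_pow (by linarith) e

theorem prod_ite_lt_le_pow {K : ℝ} (hK : 1 ≤ K) (s : Finset ℕ) (B : ℕ) :
    ∏ p ∈ s, (if p < B then K else 1) ≤ K ^ B := by
  rw [Finset.prod_ite, Finset.prod_const, Finset.prod_const_one, mul_one]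
  refine pow_le_pow_right₀ hK ?_
  simpa using Finset.card_le_card (fun p hp ↦ by simpa using (Finset.mem_filter.1 hp).2 :
    s.filter (· < B) ⊆ Finset.range B)

theorem natCast_rpow_eq_prod_primeFactors {m : ℕ} (hm : m ≠ 0) (ε : ℝ) :
    (m : ℝ) ^ ε = ∏ p ∈ m.primeFactors, ((p : ℝ) ^ ε) ^ m.factorization p := by
  simp_rw [← rpow_natCast, ← rpow_mul (Nat.cast_nonneg _), mul_comm ε,
    rpow_mul (Nat.cast_nonneg _), rpow_natCast]
  rw [finsetProd_rpow _ _ fun _ _ ↦ by positivity]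
  exact_mod_cast congrArg (fun k : ℕ ↦ (k : ℝ) ^ ε) (Nat.prod_factorization_pow_eq_self hm).symm

theorem exists_card_divisors_le_mul_rpow {ε : ℝ} (hε : 0 < ε) :
    ∃ C : ℝ, 1 ≤ C ∧ ∀ m : ℕ, m ≠ 0 → (m.divisors.card : ℝ) ≤ C * (m : ℝ) ^ ε := by
  obtain ⟨B, hB⟩ := exists_nat_ge ((2 : ℝ) ^ ε⁻¹)
  have h2ε : 1 < (2 : ℝ) ^ ε := one_lt_rpow one_lt_two hε
  set K : ℝ := 1 + 1 / (2 ^ ε - 1)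
  have hK : 1 ≤ K := le_add_of_nonneg_right (one_div_nonneg.2 (by linarith))
  refine ⟨K ^ B, one_le_pow₀ hK, fun m hm ↦ ?_⟩
  calc (m.divisors.card : ℝ)
      ≤ ∏ p ∈ m.primeFactors, (if p < B then K else 1) * ((p : ℝ) ^ ε) ^ m.factorization p := by
        rw [Nat.card_divisors hm, Nat.cast_prod]
        refine Finset.prod_le_prod (fun _ _ ↦ Nat.cast_nonneg _) fun p hp ↦ ?_
        push_cast
        split_ifs with hpB
        · have hp2 : (2 : ℝ) ≤ p := by exact_mod_cast (Nat.prime_of_mem_primeFactors hp).two_le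
          exact (natCast_add_one_le_mul_pow h2ε _).trans (by gcongr)
        · have hpε : (2 : ℝ) ≤ (p : ℝ) ^ ε := by
            rw [← rpow_inv_le_iff_of_pos zero_le_two (Nat.cast_nonneg p) hε]
            exact hB.trans (by exact_mod_cast not_lt.1 hpB)
          rw [one_mul]
          calc ((m.factorization p : ℕ) : ℝ) + 1 ≤ 2 ^ m.factorization p := by
                exact_mod_cast Nat.lt_two_pow_self
            _ ≤ _ := by gcongr
    _ ≤ K ^ B * (m : ℝ) ^ ε := by
        rw [Finset.prod_mul_distrib, natCast_rpow_eq_prod_primeFactors hm]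
        gcongr
        exact prod_ite_lt_le_pow hK _ B

end DivisorBound

section SumsOfTwoSquares

open GaussianInt Pointwise Finset.HasAntidiagonal

theorem gaussianInt_irreducible_of_norm_eq_prime {p : ℕ} (hp : p.Prime) {π : GaussianInt}
    (hπ : π.norm = p) : Irreducible π := by
  refine ⟨fun hunit ↦ hp.one_lt.ne' ?_, fun x y hxy ↦ ?_⟩
  · rw [← Zsqrtd.norm_eq_one_iff, hπ] at hunit
    simpa using hunit
  · rw [← Zsqrtd.norm_eq_one_iff, ← Zsqrtd.norm_eq_one_iff, ← Nat.isUnit_iff, ← Nat.isUnit_iff]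
    refine hp.isUnit_or_isUnit ?_
    rw [← Int.natAbs_mul, ← Zsqrtd.norm_mul, ← hxy, hπ, Int.natAbs_natCast]

theorem exists_eq_mul_or_eq_star_mul_of_norm_eq {p M : ℕ} (hp : p.Prime) {π z : GaussianInt}
    (hπ : π.norm = p) (hz : z.norm = (p * M : ℕ)) :
    ∃ w : GaussianInt, w.norm = M ∧ (z = π * w ∨ z = star π * w) := by
  have hnorm {ρ w : GaussianInt} (hρ : ρ.norm = p) (hzw : z = ρ * w) : w.norm = M := by
    rw [hzw, Zsqrtd.norm_mul, hρ, Nat.cast_mul] at hz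
    exact mul_left_cancel₀ (by exact_mod_cast hp.ne_zero) hz
  have hdvd : π ∣ z * star z := by
    rw [← Zsqrtd.norm_eq_mul_conj, hz, Nat.cast_mul, Int.cast_mul, ← hπ, Zsqrtd.norm_eq_mul_conj,
      mul_assoc]
    exact dvd_mul_right _ _
  obtain ⟨w, hw⟩ | ⟨w, hw⟩ :=
    (gaussianInt_irreducible_of_norm_eq_prime hp hπ).prime.dvd_or_dvd hdvd
  · exact ⟨w, hnorm hπ hw, Or.inl hw⟩
  · have hw' : z = star π * star w := by rw [← star_mul', ← hw, star_star]
    exact ⟨star w, hnorm ((Zsqrtd.norm_conj π).trans hπ) hw', Or.inr hw'⟩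

theorem exists_eq_pow_mul_star_pow_mul_of_norm_eq {p M k : ℕ} (hp : p.Prime) {π z : GaussianInt}
    (hπ : π.norm = p) (hz : z.norm = (p ^ k * M : ℕ)) :
    ∃ e ∈ antidiagonal k, ∃ w : GaussianInt, w.norm = M ∧
      z = π ^ e.1 * star π ^ e.2 * w := by
  simp only [mem_antidiagonal, Prod.exists]
  induction k generalizing z with
  | zero => exact ⟨0, 0, rfl, z, by simpa using hz, by simp⟩
  | succ k ih =>
    rw [pow_succ', mul_assoc] at hz
    obtain ⟨z', hz', rfl | rfl⟩ := exists_eq_mul_or_eq_star_mul_of_norm_eq hp hπ hz <;>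
      obtain ⟨i, j, rfl, w, hw, rfl⟩ := ih hz'
    · exact ⟨i + 1, j, by lia, w, hw, by ring⟩
    · exact ⟨i, j + 1, by lia, w, hw, by ring⟩

theorem exists_eq_natCast_pow_mul_of_norm_eq {p M k : ℕ} (hp : Prime (p : GaussianInt))
    (hpM : ¬ p ∣ M) {z : GaussianInt} (hz : z.norm = (p ^ k * M : ℕ)) :
    ∃ w : GaussianInt, w.norm = M ∧ z = (p : GaussianInt) ^ (k / 2) * w := by
  have hp0 : p ≠ 0 := by exact_mod_cast hp.ne_zero
  have hstep {j : ℕ} {z : GaussianInt} (hz : z.norm = (p ^ (j + 1) * M : ℕ)) :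
      ∃ z' : GaussianInt, z = p * z' ∧ p * z'.norm = (p ^ j * M : ℕ) := by
    have hdvd : (p : GaussianInt) ∣ z * star z := by
      rw [← Zsqrtd.norm_eq_mul_conj, hz, pow_succ', mul_assoc]
      exact ⟨_, by push_cast; rfl⟩
    obtain ⟨z', rfl⟩ : (p : GaussianInt) ∣ z := by
      obtain hdvd | ⟨w, hw⟩ := hp.dvd_or_dvd hdvd
      · exact hdvd
      · exact ⟨star w, by rw [← star_star z, hw, star_mul', star_natCast]⟩
    refine ⟨z', rfl, mul_left_cancel₀ (Nat.cast_ne_zero.2 hp0) ?_⟩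
    rw [Zsqrtd.norm_mul, Zsqrtd.norm_natCast] at hz
    rw [← mul_assoc, hz]
    push_cast
    ring
  induction k using Nat.twoStepInduction generalizing z with
  | zero => exact ⟨z, by simpa using hz, by simp⟩
  | one =>
    obtain ⟨z', -, hz'⟩ := hstep (j := 0) hz
    exact absurd
      ⟨z'.norm.natAbs, by simpa [Int.natAbs_mul] using (congrArg Int.natAbs hz').symm⟩ hpM
  | more k ih _ =>
    obtain ⟨z', rfl, hz'⟩ := hstep hz
    obtain ⟨w, hw, rfl⟩ := ih (z := z') <| mul_left_cancel₀ (Nat.cast_ne_zero.2 hp0) <|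
      hz'.trans (by push_cast; ring)
    exact ⟨w, hw, by rw [Nat.add_div_right _ two_pos]; ring⟩

theorem exists_finset_setOf_norm_eq_subset_mul {p M : ℕ} (k : ℕ) (hp : p.Prime) (hpM : ¬ p ∣ M) :
    ∃ A : Finset GaussianInt, A.card ≤ k + 1 ∧
      {z : GaussianInt | z.norm = (p ^ k * M : ℕ)} ⊆ A * {z : GaussianInt | z.norm = M} := by
  by_cases hirr : Irreducible (p : GaussianInt)
  · refine ⟨{(p : GaussianInt) ^ (k / 2)}, by simp, fun z hz ↦ ?_⟩
    obtain ⟨w, hw, rfl⟩ := exists_eq_natCast_pow_mul_of_norm_eq hirr.prime hpM hz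
    exact Set.mul_mem_mul (by simp) hw
  · have := Fact.mk hp
    obtain ⟨x, y, hxy⟩ := sq_add_sq_of_nat_prime_of_not_irreducible p hirr
    have hπ : Zsqrtd.norm (⟨x, y⟩ : GaussianInt) = p := by
      rw [← hxy, Zsqrtd.norm_def]
      push_cast
      ring
    refine ⟨(antidiagonal k).image fun e ↦ (⟨x, y⟩ : GaussianInt) ^ e.1 * star ⟨x, y⟩ ^ e.2,
      Finset.card_image_le.trans (Finset.Nat.card_antidiagonal k).le, fun z hz ↦ ?_⟩
    obtain ⟨e, he, w, hw, rfl⟩ := exists_eq_pow_mul_star_pow_mul_of_norm_eq hp hπ hz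
    exact Set.mul_mem_mul (Finset.mem_coe.2 (Finset.mem_image_of_mem _ he)) hw

theorem encard_setOf_norm_eq_one_le : {z : GaussianInt | z.norm = 1}.encard ≤ 4 := by
  let units : Finset GaussianInt := {⟨1, 0⟩, ⟨-1, 0⟩, ⟨0, 1⟩, ⟨0, -1⟩}
  have hcard : units.card = 4 := rfl
  have hsub : {z : GaussianInt | z.norm = 1} ⊆ units := by
    rintro ⟨x, y⟩ hz
    have hxy : x ^ 2 + y ^ 2 = 1 := by
      rw [← Set.mem_ofPred.1 hz, Zsqrtd.norm_def]
      ring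
    have hx : |x| ≤ 1 := (sq_le_one_iff_abs_le_one x).1 (by nlinarith)
    have hy : |y| ≤ 1 := (sq_le_one_iff_abs_le_one y).1 (by nlinarith)
    obtain ⟨hx₁, hx₂⟩ := abs_le.1 hx
    obtain ⟨hy₁, hy₂⟩ := abs_le.1 hy
    interval_cases x <;> interval_cases y <;> simp_all [units]
  exact (Set.encard_le_encard hsub).trans (by simp [Set.encard_coe_eq_coe_finsetCard, hcard])

theorem encard_setOf_norm_eq_le {M : ℕ} (hM : M ≠ 0) :
    {z : GaussianInt | z.norm = M}.encard ≤ 4 * M.divisors.card := by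
  induction M using Nat.recOnPrimePow with
  | zero => exact absurd rfl hM
  | one => simpa using encard_setOf_norm_eq_one_le
  | prime_pow_mul M p k hp hpM _ ih =>
    obtain ⟨A, hA, hsub⟩ := exists_finset_setOf_norm_eq_subset_mul k hp hpM
    calc {z : GaussianInt | z.norm = (p ^ k * M : ℕ)}.encard
        ≤ ((A : Set GaussianInt) ×ˢ {z : GaussianInt | z.norm = M}).encard := by
          refine (Set.encard_le_encard hsub).trans ?_
          rw [← Set.image_mul_prod]
          exact Set.encard_image_le _ _
      _ ≤ (k + 1 : ℕ) * (4 * M.divisors.card) := by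
          rw [Set.encard_prod, Set.encard_coe_eq_coe_finsetCard]
          gcongr
          exact ih (right_ne_zero_of_mul hM)
      _ = 4 * (p ^ k * M).divisors.card := by
          rw [((hp.coprime_iff_not_dvd.2 hpM).pow_left k).card_divisors_mul,
            Nat.divisors_prime_pow hp, Finset.card_map, Finset.card_range]
          push_cast
          ring

theorem encard_setOf_abs_sq_sub_eq_sq_le {M : ℕ} (hM : M ≠ 0) :
    {m : ℕ | ∃ u : ℤ, |u ^ 2 - M| = m ^ 2}.encard ≤ 5 * M.divisors.card := by
  have hsub : {m : ℕ | ∃ u : ℤ, |u ^ 2 - M| = m ^ 2} ⊆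
      (fun δ ↦ (δ - M / δ) / 2) '' (M.divisors : Set ℕ) ∪
        (fun z : GaussianInt ↦ z.im.natAbs) '' {z : GaussianInt | z.norm = M} := by
    rintro m ⟨u, hu⟩
    rcases (abs_eq (sq_nonneg _)).1 hu with hu | hu
    · left
      -- `M = (|u| + m) * (|u| - m)`
      have hmu : m < u.natAbs := by
        have : (m : ℤ) ^ 2 < u ^ 2 := by
          have : (0 : ℤ) < M := by exact_mod_cast Nat.pos_of_ne_zero hM
          linarith
        simpa using Int.natAbs_lt_iff_sq_lt.2 this
      have hmul : (u.natAbs + m) * (u.natAbs - m) = M := by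
        zify [hmu.le]
        linear_combination sq_abs u + hu
      refine ⟨u.natAbs + m, by simpa [hM] using Dvd.intro _ hmul, ?_⟩
      simp only [← hmul]
      rw [Nat.mul_div_cancel_left _ (by lia)]
      lia
    · right
      refine ⟨⟨u, m⟩, ?_, by simp⟩
      rw [Set.mem_ofPred, Zsqrtd.norm_def]
      linear_combination hu
  calc _ ≤ _ := (Set.encard_le_encard hsub).trans (Set.encard_union_le _ _)
    _ ≤ (M.divisors.card : ℕ∞) + 4 * M.divisors.card := by
        refine add_le_add ?_ ((Set.encard_image_le _ _).trans (encard_setOf_norm_eq_le hM))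
        rw [← Set.encard_coe_eq_coe_finsetCard]
        exact Set.encard_image_le _ _
    _ = 5 * M.divisors.card := by ring

end SumsOfTwoSquares

section SparseSum

open QuadraticAlgebra Real

variable {a n : ℤ}

theorem encard_setOf_abs_norm_eq_sq_le {b : ℤ} {k D : ℕ} (hk : k ≠ 0) (hD : D ≠ 0)
    (hdisc : (D : ℤ) = b ^ 2 + 4 * a) :
    {m : ℕ | ∃ z : QuadraticAlgebra ℤ a b, z.im.natAbs = k ∧ |norm z| = m ^ 2}.encard ≤
      5 * (D * k ^ 2).divisors.card := by
  refine le_trans (Set.InjOn.encard_image (f := (2 * ·))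
    (mul_right_injective₀ two_ne_zero).injOn).ge ?_
  refine (Set.encard_le_encard ?_).trans
    (encard_setOf_abs_sq_sub_eq_sq_le (mul_ne_zero hD (pow_ne_zero 2 hk)))
  rintro _ ⟨m, ⟨z, rfl, hz⟩, rfl⟩
  refine ⟨trace z, ?_⟩
  push_cast
  rw [sq_abs, hdisc, ← four_mul_norm, abs_mul, hz]
  norm_num
  ring

theorem natCast_rpow_neg_le {c : ℝ} (hc : 0 < c) {s : ℝ} (hs : 0 ≤ s) {m k : ℕ} (hk : k ≠ 0)
    (h : c * (k : ℝ) ^ 2 ≤ (m : ℝ) ^ 2) : (m : ℝ) ^ (-s) ≤ c ^ (-s / 2) * (k : ℝ) ^ (-s) := by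
  have hsq (x : ℝ) (hx : 0 ≤ x) : (x ^ 2) ^ (-s / 2) = x ^ (-s) := by
    rw [← rpow_natCast, ← rpow_mul hx]
    congr 1
    push_cast
    ring
  have hk' : (0 : ℝ) < k := by positivity
  rw [← hsq m (Nat.cast_nonneg m), ← hsq k hk'.le, ← mul_rpow hc.le (by positivity)]
  exact rpow_le_rpow_of_nonpos (by positivity) h (by linarith)

theorem exists_natCast_eq_sq_add_four_mul (ha : IsUnit a) (hn : 3 ≤ n) :
    ∃ D : ℕ, D ≠ 0 ∧ (D : ℤ) = n ^ 2 + 4 * a ∧ (D : ℤ) ≤ 2 * n ^ 2 := by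
  have hpos : 0 < n ^ 2 + 4 * a := by rcases Int.isUnit_iff.1 ha with rfl | rfl <;> nlinarith
  have hle : n ^ 2 + 4 * a ≤ 2 * n ^ 2 := by
    rcases Int.isUnit_iff.1 ha with rfl | rfl <;> nlinarith
  obtain ⟨D, hD⟩ := Int.eq_ofNat_of_zero_le hpos.le
  exact ⟨D, by lia, hD.symm, hD ▸ hle⟩

theorem exists_card_fiber_reducedNormRoots_le {ε : ℝ} (hε : 0 < ε) :
    ∃ C : ℝ, 0 ≤ C ∧ ∀ a n : ℤ, IsUnit a → 3 ≤ n → ∀ k : ℕ, k ≠ 0 → ∀ S : Finset ℕ,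
      (∀ m ∈ S, ∃ z : QuadraticAlgebra ℤ a n, z.im.natAbs = k ∧ |norm z| = m ^ 2) →
      (S.card : ℝ) ≤ C * (n * k) ^ ε := by
  obtain ⟨C, hC, hdiv⟩ := exists_card_divisors_le_mul_rpow (ε := ε / 2) (by linarith)
  refine ⟨5 * C * 2 ^ (ε / 2), by positivity, fun a n ha hn k hk S hS ↦ ?_⟩
  obtain ⟨D, hD0, hD, hDle⟩ := exists_natCast_eq_sq_add_four_mul ha hn
  have hcard : S.card ≤ 5 * (D * k ^ 2).divisors.card := by
    have := (Set.encard_le_encard hS).trans (encard_setOf_abs_norm_eq_sq_le hk hD0 hD)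
    rw [Set.encard_coe_eq_coe_finsetCard] at this
    exact_mod_cast this
  have hle : ((D * k ^ 2 : ℕ) : ℝ) ≤ 2 * (n * k) ^ 2 := by
    have : (D : ℤ) * k ^ 2 ≤ 2 * n ^ 2 * k ^ 2 := by gcongr
    calc ((D * k ^ 2 : ℕ) : ℝ) ≤ 2 * n ^ 2 * k ^ 2 := by exact_mod_cast this
      _ = _ := by ring
  have hnk : (0 : ℝ) ≤ n * k := mul_nonneg (by exact_mod_cast (by lia : 0 ≤ n)) (Nat.cast_nonneg k)
  calc (S.card : ℝ) ≤ 5 * (D * k ^ 2).divisors.card := by exact_mod_cast hcard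
    _ ≤ 5 * (C * ((D * k ^ 2 : ℕ) : ℝ) ^ (ε / 2)) := by
      gcongr
      exact hdiv _ (mul_ne_zero hD0 (pow_ne_zero 2 hk))
    _ ≤ 5 * (C * (2 * (n * k) ^ 2) ^ (ε / 2)) := by gcongr
    _ = 5 * C * 2 ^ (ε / 2) * (n * k) ^ ε := by
      rw [mul_rpow zero_le_two (by positivity), ← rpow_natCast (n * k : ℝ) 2, ← rpow_mul hnk]
      push_cast
      ring_nf

theorem exists_sum_fiber_reducedNormRoots_le {s : ℝ} (hs : 1 < s) :
    ∃ C : ℝ, 0 ≤ C ∧ ∀ a n : ℤ, IsUnit a → 3 ≤ n → ∀ k : ℕ, k ≠ 0 → ∀ S : Finset ℕ,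
      (∀ m ∈ S, ∃ z : QuadraticAlgebra ℤ a n, z.im.natAbs = k ∧ |norm z| = m ^ 2 ∧
        (n - 2) * z.im ^ 2 ≤ m ^ 2) →
      ∑ m ∈ S, (m : ℝ) ^ (-s) ≤ C * (n : ℝ) ^ (-(1 / 2) : ℝ) * (k : ℝ) ^ (-((s + 1) / 2)) := by
  obtain ⟨C, hC, hcard⟩ := exists_card_fiber_reducedNormRoots_le (ε := (s - 1) / 2) (by linarith)
  refine ⟨C * 3⁻¹ ^ (-s / 2), by positivity, fun a n ha hn k hk S hS ↦ ?_⟩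
  have hn' : (3 : ℝ) ≤ n := by exact_mod_cast hn
  have hn0 : (0 : ℝ) < n := by linarith
  have hk0 : (0 : ℝ) < k := by positivity
  have hterm (m) (hm : m ∈ S) : (m : ℝ) ^ (-s) ≤ (3⁻¹ * n) ^ (-s / 2) * (k : ℝ) ^ (-s) := by
    obtain ⟨z, rfl, -, hz⟩ := hS m hm
    refine natCast_rpow_neg_le (by positivity) (by linarith) hk ?_
    have hz' : ((n : ℝ) - 2) * (z.im.natAbs : ℝ) ^ 2 ≤ (m : ℝ) ^ 2 := by
      rw [Nat.cast_natAbs, Int.cast_abs, sq_abs]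
      exact_mod_cast hz
    exact le_trans (by gcongr; linarith) hz'
  calc ∑ m ∈ S, (m : ℝ) ^ (-s) ≤ S.card * ((3⁻¹ * n) ^ (-s / 2) * (k : ℝ) ^ (-s)) := by
        simpa [nsmul_eq_mul] using Finset.sum_le_card_nsmul S _ _ hterm
    _ ≤ C * (n * k) ^ ((s - 1) / 2) * ((3⁻¹ * n) ^ (-s / 2) * (k : ℝ) ^ (-s)) := by
        gcongr
        exact hcard a n ha hn k hk S fun m hm ↦ (hS m hm).imp fun _ h ↦ ⟨h.1, h.2.1⟩
    _ = C * 3⁻¹ ^ (-s / 2) * ((n : ℝ) ^ ((s - 1) / 2) * n ^ (-s / 2)) *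
          ((k : ℝ) ^ ((s - 1) / 2) * k ^ (-s)) := by
        rw [mul_rpow hn0.le hk0.le, mul_rpow (by positivity) hn0.le]
        ring
    _ = _ := by
        rw [← rpow_add hn0, ← rpow_add hk0]
        ring_nf

theorem exists_sum_reducedNormRoots_rpow_neg_le {s : ℝ} (hs : 1 < s) :
    ∃ C : ℝ, 0 ≤ C ∧ ∀ a n : ℤ, IsUnit a → 3 ≤ n → ∀ S : Finset ℕ,
      (S : Set ℕ) ⊆ reducedNormRoots a n →
      ∑ m ∈ S, (m : ℝ) ^ (-s) ≤ C * (n : ℝ) ^ (-(1 / 2) : ℝ) := by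
  obtain ⟨C, hC, hfiber⟩ := exists_sum_fiber_reducedNormRoots_le hs
  have hsum : Summable fun k : ℕ ↦ (k : ℝ) ^ (-((s + 1) / 2)) :=
    summable_nat_rpow.2 (by linarith)
  refine ⟨C * ∑' k : ℕ, (k : ℝ) ^ (-((s + 1) / 2)), by positivity, fun a n ha hn S hS ↦ ?_⟩
  choose! z him hnorm hle using fun m (hm : m ∈ S) ↦ hS hm
  have : (0 : ℝ) ≤ n := by exact_mod_cast (by lia : 0 ≤ n)
  let k (m : ℕ) : ℕ := (z m).im.natAbs
  calc ∑ m ∈ S, (m : ℝ) ^ (-s) = ∑ j ∈ S.image k, ∑ m ∈ S with k m = j, (m : ℝ) ^ (-s) :=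
        (Finset.sum_fiberwise_of_maps_to (fun m hm ↦ Finset.mem_image_of_mem k hm) _).symm
    _ ≤ ∑ j ∈ S.image k, C * (n : ℝ) ^ (-(1 / 2) : ℝ) * (j : ℝ) ^ (-((s + 1) / 2)) := by
        refine Finset.sum_le_sum fun j hj ↦ hfiber a n ha hn j ?_ _ fun m hm ↦ ?_
        · obtain ⟨m, hm, rfl⟩ := Finset.mem_image.1 hj
          exact Int.natAbs_ne_zero.2 (him m hm)
        · obtain ⟨hmS, hmk⟩ := Finset.mem_filter.1 hm
          exact ⟨z m, hmk, hnorm m hmS, hle m hmS⟩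
    _ ≤ C * (n : ℝ) ^ (-(1 / 2) : ℝ) * ∑' k : ℕ, (k : ℝ) ^ (-((s + 1) / 2)) := by
        rw [← Finset.mul_sum]
        gcongr
        exact hsum.sum_le_tsum _ fun _ _ ↦ by positivity
    _ = _ := by ring

end SparseSum

section Estermann

open Complex Filter Topology Metric LSeries

/-- `A` is an entire function such that `A s / (s - 1)` is the sum of the Dirichlet series of `a`
for `1 < re s`, so that the Dirichlet series continues to `ℂ` with at most a simple pole at `1`, of
residue `A 1`. -/
structure EntireContinuation (a : ℕ → ℝ) (A : ℂ → ℂ) : Prop where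
  differentiable : Differentiable ℂ A
  hasSum : ∀ s : ℂ, 1 < s.re → LSeriesHasSum (fun k ↦ (a k : ℂ)) s (A s / (s - 1))

/-- `(-1) ^ m` times the `m`-th Taylor coefficient at `2` of the Dirichlet series of `a`. -/
def taylorCoeff (a : ℕ → ℝ) (m : ℕ) : ℝ :=
  ∑' k : ℕ, a k / (k : ℝ) ^ 2 * (Real.log k ^ m / m.factorial)

theorem logMul_iterate_apply (f : ℕ → ℂ) (m k : ℕ) :
    (logMul^[m] f) k = log k ^ m * f k := by
  induction m generalizing f with
  | zero => simp
  | succ m ih =>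
    rw [Function.iterate_succ_apply, ih, logMul]
    ring

theorem LSeries_logMul_iterate_two (a : ℕ → ℝ) (m : ℕ) :
    LSeries (logMul^[m] fun k ↦ (a k : ℂ)) 2 = m.factorial * taylorCoeff a m := by
  have hm : (m.factorial : ℂ) ≠ 0 := by exact_mod_cast m.factorial_ne_zero
  rw [taylorCoeff, LSeries, ofReal_tsum, ← tsum_mul_left]
  refine tsum_congr fun k ↦ ?_
  rcases eq_or_ne k 0 with rfl | hk
  · simp
  · rw [term_of_ne_zero hk, logMul_iterate_apply, ← natCast_log, cpow_ofNat]
    push_cast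
    field_simp

theorem taylorCoeff_nonneg {a : ℕ → ℝ} (ha : ∀ k, 0 ≤ a k) (m : ℕ) : 0 ≤ taylorCoeff a m :=
  tsum_nonneg fun k ↦ mul_nonneg (div_nonneg (ha k) (sq_nonneg _))
    (div_nonneg (pow_nonneg (Real.log_natCast_nonneg k) m) (Nat.cast_nonneg _))

theorem one_third_le_norm_sub_one_of_mem_sphere {s : ℂ} (hs : s ∈ sphere (2 : ℂ) (4 / 3)) :
    1 / 3 ≤ ‖s - 1‖ := by
  have h := norm_sub_le (s - 1) 1
  rw [show s - 1 - 1 = s - 2 by ring, mem_sphere_iff_norm.1 hs, norm_one] at h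
  linarith

theorem ne_one_of_mem_sphere_two {s : ℂ} (hs : s ∈ sphere (2 : ℂ) (4 / 3)) : s ≠ 1 := by
  rintro rfl
  have := one_third_le_norm_sub_one_of_mem_sphere hs
  norm_num at this

theorem norm_dslope_le_of_forall_mem_sphere {A : ℂ → ℂ} (hA : Differentiable ℂ A) {M : ℝ}
    (hM : ∀ s ∈ sphere (2 : ℂ) (4 / 3), ‖A s‖ ≤ M) {s : ℂ} (hs : s ∈ sphere (2 : ℂ) (4 / 3)) :
    ‖dslope A 1 s‖ ≤ 6 * M := by
  have hA1 : ‖A 1‖ ≤ M := by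
    refine norm_le_of_forall_mem_frontier_norm_le (U := ball (2 : ℂ) (4 / 3)) isBounded_ball
      hA.diffContOnCl (fun z hz ↦ hM z ?_) (subset_closure ?_)
    · rwa [frontier_ball _ (by norm_num)] at hz
    · rw [mem_ball, dist_eq_norm]
      norm_num
  have hs1 := one_third_le_norm_sub_one_of_mem_sphere hs
  rw [dslope_of_ne _ (ne_one_of_mem_sphere_two hs), slope_def_field, norm_div,
    div_le_iff₀ (by linarith)]
  have := norm_sub_le (A s) (A 1)
  nlinarith [hM s hs, (norm_nonneg _).trans hA1]

theorem differentiable_dslope {A : ℂ → ℂ} (hA : Differentiable ℂ A) (c : ℂ) :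
    Differentiable ℂ (dslope A c) := by
  rw [← differentiableOn_univ] at hA ⊢
  exact (differentiableOn_dslope univ_mem).2 hA

namespace EntireContinuation

variable {a : ℕ → ℝ} {A : ℂ → ℂ}

theorem abscissaOfAbsConv_lt_two (h : EntireContinuation a A) :
    abscissaOfAbsConv (fun k ↦ (a k : ℂ)) < (2 : ℂ).re := by
  refine (abscissaOfAbsConv_le_of_forall_lt_LSeriesSummable (x := 1) fun y hy ↦
    (h.hasSum y (by simpa using hy)).LSeriesSummable).trans_lt ?_
  rw [re_ofNat]
  exact_mod_cast one_lt_two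

theorem iteratedDeriv_dslope (h : EntireContinuation a A) (m : ℕ) :
    iteratedDeriv m (dslope A 1) 2 = m.factorial * (-1) ^ m * (taylorCoeff a m - A 1) := by
  have hev : dslope A 1 =ᶠ[𝓝 2] (LSeries (fun k ↦ (a k : ℂ)) - fun s ↦ A 1 * (s - 1)⁻¹) := by
    filter_upwards [(isOpen_lt continuous_const continuous_re).mem_nhds
      (show (2 : ℂ) ∈ {s : ℂ | 1 < s.re} by simp)] with s hs
    have hs1 : s ≠ 1 := by
      rintro rfl
      simp at hs
    rw [dslope_of_ne _ hs1, slope_def_field, Pi.sub_apply, (h.hasSum s hs).LSeries_eq, sub_div,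
      div_eq_mul_inv (A 1)]
  have hinv : iteratedDeriv m (fun s : ℂ ↦ (s - 1)⁻¹) 2 = (-1) ^ m * m.factorial := by
    rw [iteratedDeriv_comp_sub_const (f := fun s : ℂ ↦ s⁻¹)]
    simp only
    rw [iteratedDeriv_eq_iterate, iter_deriv_inv]
    norm_num
  rw [hev.iteratedDeriv_eq, iteratedDeriv_sub, LSeries_iteratedDeriv m h.abscissaOfAbsConv_lt_two,
    LSeries_logMul_iterate_two, iteratedDeriv_const_mul_field, hinv]
  · ring
  · exact (LSeries_analyticOnNhd _ 2 h.abscissaOfAbsConv_lt_two).contDiffAt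
  · exact contDiffAt_const.mul (ContDiffAt.inv (by fun_prop) (by norm_num))

theorem abs_taylorCoeff_sub_re_le (h : EntireContinuation a A) {M : ℝ}
    (hM : ∀ s ∈ sphere (2 : ℂ) (4 / 3), ‖A s‖ ≤ M) (m : ℕ) :
    |taylorCoeff a m - (A 1).re| ≤ 6 * M * (3 / 4) ^ m := by
  have hbound := norm_iteratedDeriv_le_of_forall_mem_sphere_norm_le m
    (by norm_num : (0 : ℝ) < 4 / 3) (differentiable_dslope h.differentiable 1).diffContOnCl
    fun s ↦ norm_dslope_le_of_forall_mem_sphere h.differentiable hM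
  have hm : (0 : ℝ) < m.factorial := by exact_mod_cast m.factorial_pos
  simp only [h.iteratedDeriv_dslope, norm_mul, norm_natCast, norm_pow, norm_neg, norm_one, one_pow,
    mul_one, mul_div_assoc] at hbound
  calc |taylorCoeff a m - (A 1).re| ≤ ‖(taylorCoeff a m : ℂ) - A 1‖ := by
        simpa using abs_re_le_norm ((taylorCoeff a m : ℂ) - A 1)
    _ ≤ 6 * (M / (4 / 3) ^ m) := le_of_mul_le_mul_left hbound hm
    _ = 6 * M * (3 / 4) ^ m := by
        rw [div_eq_mul_inv, ← inv_pow, inv_div, mul_assoc]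

theorem one_le_taylorCoeff_zero (h : EntireContinuation a A) (ha : ∀ k, 0 ≤ a k) (ha1 : a 1 = 1) :
    1 ≤ taylorCoeff a 0 := by
  have hsum : Summable fun k : ℕ ↦ a k / (k : ℝ) ^ 2 * (Real.log k ^ 0 / (Nat.factorial 0)) := by
    refine (LSeriesSummable_of_abscissaOfAbsConv_lt_re h.abscissaOfAbsConv_lt_two).norm.congr
      fun k ↦ ?_
    rcases eq_or_ne k 0 with rfl | hk
    · simp
    · rw [term_of_ne_zero hk, cpow_ofNat]
      simp [abs_of_nonneg (ha k)]
  have := hsum.le_tsum 1 fun k _ ↦ by simpa using div_nonneg (ha k) (sq_nonneg _)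
  rw [ha1] at this
  simpa [taylorCoeff] using this

theorem hasSum_taylorCoeff_sub (h : EntireContinuation a A) {β : ℝ} (hβ : β ≠ 1) :
    HasSum (fun k : ℕ ↦ (taylorCoeff a k - (A 1).re) * (2 - β) ^ k)
      (((A β).re - (A 1).re) / (β - 1)) := by
  have hdslope : (dslope A 1 β).re = ((A β).re - (A 1).re) / (β - 1) := by
    rw [dslope_of_ne _ (by exact_mod_cast hβ), slope_def_field, ← ofReal_one, ← ofReal_sub,
      div_ofReal_re, sub_re]
  have hterm (k : ℕ) : (k.factorial : ℂ)⁻¹ • ((β : ℂ) - 2) ^ k • iteratedDeriv k (dslope A 1) 2 =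
      ((2 - β) ^ k : ℝ) * ((taylorCoeff a k : ℂ) - A 1) := by
    have hk : (k.factorial : ℂ) ≠ 0 := by exact_mod_cast k.factorial_ne_zero
    rw [h.iteratedDeriv_dslope, show (β : ℂ) - 2 = -1 * (2 - β) by ring, mul_pow]
    push_cast
    simp only [smul_eq_mul]
    field_simp
    rw [← pow_mul, mul_comm k 2, pow_mul, neg_one_sq, one_pow, one_mul]
  rw [← hdslope]
  refine (hasSum_re (hasSum_taylorSeries_of_entire (differentiable_dslope h.differentiable 1) 2
    (β : ℂ))).congr_fun fun k ↦ ?_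
  rw [hterm, re_ofReal_mul, sub_re, ofReal_re, mul_comm]

theorem one_sub_le_sum_range (h : EntireContinuation a A) (ha : ∀ k, 0 ≤ a k) (ha1 : a 1 = 1)
    {β : ℝ} (hβ : β < 1) {m : ℕ} (hm : m ≠ 0) :
    1 - (A 1).re * (((2 - β) ^ m - 1) / (1 - β)) ≤
      ∑ k ∈ Finset.range m, (taylorCoeff a k - (A 1).re) * (2 - β) ^ k := by
  have hgeom : ∑ k ∈ Finset.range m, (2 - β) ^ k = ((2 - β) ^ m - 1) / (1 - β) := by
    rw [geom_sum_eq (by linarith)]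
    congr 1
    ring
  have hfirst := Finset.single_le_sum (f := fun k ↦ taylorCoeff a k * (2 - β) ^ k)
    (fun k _ ↦ mul_nonneg (taylorCoeff_nonneg ha k) (pow_nonneg (by linarith) k))
    (Finset.mem_range.2 hm.bot_lt)
  have hone := h.one_le_taylorCoeff_zero ha ha1
  simp only [Nat.bot_eq_zero, pow_zero, mul_one] at hfirst
  simp only [← hgeom, Finset.mul_sum, sub_mul, Finset.sum_sub_distrib]
  linarith

theorem neg_le_tsum_taylorCoeff_sub (h : EntireContinuation a A) {M : ℝ}
    (hM : ∀ s ∈ sphere (2 : ℂ) (4 / 3), ‖A s‖ ≤ M) {β : ℝ} (hβ : 7 / 8 ≤ β) (hβ1 : β < 1)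
    (m : ℕ) :
    -(40 * M * (27 / 32) ^ m) ≤
      ∑' k, (taylorCoeff a (k + m) - (A 1).re) * (2 - β) ^ (k + m) := by
  have hM0 : 0 ≤ M := (norm_nonneg _).trans (hM (2 + (4 / 3 : ℝ)) (by simp))
  have hgeom : HasSum (fun k : ℕ ↦ -(6 * M * (27 / 32 : ℝ) ^ (k + m)))
      (-(6 * M * ((27 / 32 : ℝ) ^ m * (1 - 27 / 32)⁻¹))) := by
    simp only [pow_add, mul_comm _ ((27 / 32 : ℝ) ^ m)]
    exact (((hasSum_geometric_of_lt_one (by norm_num) (by norm_num)).mul_left _).mul_left _).neg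
  have hsummable := (summable_nat_add_iff m).2 (h.hasSum_taylorCoeff_sub hβ1.ne).summable
  have hterm (k : ℕ) : -(6 * M * (27 / 32 : ℝ) ^ k) ≤
      (taylorCoeff a k - (A 1).re) * (2 - β) ^ k := by
    refine neg_le_of_abs_le ?_
    rw [abs_mul, abs_pow, abs_of_pos (by linarith : 0 < 2 - β)]
    calc |taylorCoeff a k - (A 1).re| * (2 - β) ^ k ≤ 6 * M * (3 / 4) ^ k * (9 / 8) ^ k := by
          gcongr
          · exact pow_nonneg (by linarith) k
          · exact h.abs_taylorCoeff_sub_re_le hM k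
          · linarith
          · linarith
      _ = 6 * M * (27 / 32) ^ k := by
          rw [mul_assoc, ← mul_pow]
          norm_num
  refine le_trans ?_ (hasSum_le (fun k ↦ hterm (k + m)) hgeom hsummable.hasSum)
  have : 0 ≤ M * (27 / 32 : ℝ) ^ m := by positivity
  norm_num
  linarith

/-- Truncating the Taylor expansion of `(A s - A 1) / (s - 1)` at `2` after `m` terms: the first
terms are bounded below by `1` and the tail is geometric. -/
theorem one_sub_mul_le_re_mul_pow (h : EntireContinuation a A) (ha : ∀ k, 0 ≤ a k)
    (ha1 : a 1 = 1) {M : ℝ} (hM : ∀ s ∈ sphere (2 : ℂ) (4 / 3), ‖A s‖ ≤ M) {β : ℝ} (hβ : 7 / 8 ≤ β)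
    (hβ1 : β < 1) (hAβ : 0 ≤ (A β).re) {m : ℕ} (hm : m ≠ 0) :
    (1 - β) * (1 - 40 * M * (27 / 32) ^ m) ≤ (A 1).re * (2 - β) ^ m := by
  have hsum := h.hasSum_taylorCoeff_sub hβ1.ne
  have htotal := hsum.summable.sum_add_tsum_nat_add m
  rw [hsum.tsum_eq] at htotal
  have hhead := h.one_sub_le_sum_range ha ha1 hβ1 hm
  have htail := h.neg_le_tsum_taylorCoeff_sub hM hβ hβ1 m
  have hle : (1 - 40 * M * (27 / 32) ^ m) ≤
      ((A 1).re * ((2 - β) ^ m - 1) + ((A 1).re - (A β).re)) / (1 - β) := by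
    rw [add_div, mul_div_assoc, ← neg_div_neg_eq ((A 1).re - _), neg_sub, neg_sub]
    linarith
  rw [le_div_iff₀ (by linarith)] at hle
  linarith

theorem one_sub_le (h : EntireContinuation a A) (ha : ∀ k, 0 ≤ a k)
    (ha1 : a 1 = 1) {M : ℝ} (hM : ∀ s ∈ sphere (2 : ℂ) (4 / 3), ‖A s‖ ≤ M) {β : ℝ} (hβ : 7 / 8 ≤ β)
    (hβ1 : β < 1) (hAβ : 0 ≤ (A β).re) {m : ℕ} (hm : m ≠ 0) :
    1 - β ≤ (2 - β) ^ m * (taylorCoeff a m + 6 * M * (3 / 4) ^ m) + 40 * M * (27 / 32) ^ m := by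
  have hM0 : 0 ≤ M := (norm_nonneg _).trans (hM (2 + (4 / 3 : ℝ)) (by simp))
  have htail : (1 - β) * (40 * M * (27 / 32) ^ m) ≤ 40 * M * (27 / 32) ^ m :=
    mul_le_of_le_one_left (by positivity) (by linarith)
  have hresidue : (A 1).re ≤ taylorCoeff a m + 6 * M * (3 / 4) ^ m := by
    linarith [(abs_le.1 (h.abs_taylorCoeff_sub_re_le hM m)).1]
  have hpow : 0 ≤ (2 - β) ^ m := pow_nonneg (by linarith) m
  linarith [h.one_sub_mul_le_re_mul_pow ha ha1 hM hβ hβ1 hAβ hm,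
    mul_le_mul_of_nonneg_right hresidue hpow]

theorem im_ofReal (h : EntireContinuation a A) (x : ℝ) : (A x).im = 0 := by
  have hterm (y : ℝ) (k : ℕ) : (term (fun k ↦ (a k : ℂ)) y k).im = 0 := by
    rcases eq_or_ne k 0 with rfl | hk
    · simp
    · rw [term_of_ne_zero hk, ← ofReal_natCast, ← ofReal_cpow k.cast_nonneg, ← ofReal_div,
        ofReal_im]
  have hev : (fun y : ℝ ↦ (A y).im) =ᶠ[𝓝 2] fun _ ↦ 0 := by
    filter_upwards [lt_mem_nhds (one_lt_two : (1 : ℝ) < 2)] with y hy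
    have hsum := hasSum_im (h.hasSum y (by simpa using hy))
    simp only [hterm] at hsum
    have him := hasSum_zero.unique hsum
    rw [← ofReal_one, ← ofReal_sub, div_ofReal_im, eq_comm, div_eq_zero_iff] at him
    exact him.resolve_right (sub_ne_zero.2 hy.ne')
  exact congrFun (AnalyticOnNhd.eq_of_eventuallyEq (𝕜 := ℝ) (E := ℝ) (F := ℝ)
    (fun y _ ↦ (h.differentiable.analyticAt y).im_ofReal) (fun _ _ ↦ analyticAt_const) hev) x

theorem re_one_nonneg (h : EntireContinuation a A) (ha : ∀ k, 0 ≤ a k) : 0 ≤ (A 1).re := by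
  obtain ⟨M, hM⟩ := (isCompact_sphere (2 : ℂ) (4 / 3)).exists_bound_of_continuousOn
    h.differentiable.continuous.continuousOn
  have hlim : Tendsto (fun m : ℕ ↦ -(6 * M * (3 / 4 : ℝ) ^ m)) atTop (𝓝 0) := by
    simpa using ((tendsto_pow_atTop_nhds_zero_of_lt_one (by norm_num : (0 : ℝ) ≤ 3 / 4)
      (by norm_num)).const_mul (6 * M)).neg
  refine le_of_tendsto' hlim fun m ↦ ?_
  linarith [(abs_le.1 (h.abs_taylorCoeff_sub_re_le hM m)).2, taylorCoeff_nonneg ha m]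

theorem exists_zero_of_re_neg (h : EntireContinuation a A) (ha : ∀ k, 0 ≤ a k) (h1 : A 1 ≠ 0)
    {x : ℝ} (hx : x ≤ 1) (hneg : (A x).re < 0) : ∃ β ∈ Set.Ioo x 1, A β = 0 := by
  have hcont : Continuous fun y : ℝ ↦ (A y).re :=
    continuous_re.comp (h.differentiable.continuous.comp continuous_ofReal)
  have hpos : 0 < (A (1 : ℝ)).re := by
    rw [ofReal_one]
    refine (h.re_one_nonneg ha).lt_of_ne' fun h0 ↦ h1 (Complex.ext h0 ?_)
    simpa using h.im_ofReal 1
  obtain ⟨β, hβ, hAβ⟩ := intermediate_value_Ioo hx hcont.continuousOn ⟨hneg, hpos⟩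
  exact ⟨β, hβ, Complex.ext hAβ (h.im_ofReal β)⟩

end EntireContinuation

end Estermann

section UpperBound

open Real Metric

theorem log_pow_div_factorial_le {x κ : ℝ} (hx : 1 ≤ x) (hκ : 0 < κ) (m : ℕ) :
    log x ^ m / m.factorial ≤ x ^ κ * κ⁻¹ ^ m := by
  have hlog : 0 ≤ log x := log_nonneg hx
  calc log x ^ m / m.factorial = (κ * log x) ^ m / m.factorial * κ⁻¹ ^ m := by
        rw [mul_pow, inv_pow]
        field_simp
    _ ≤ exp (κ * log x) * κ⁻¹ ^ m := by
        gcongr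
        exact pow_div_factorial_le_exp _ (by positivity) m
    _ = x ^ κ * κ⁻¹ ^ m := by rw [rpow_def_of_pos (by linarith), mul_comm κ]

theorem div_sq_mul_log_pow_div_factorial_le {x y C ε κ : ℝ} (hx : 1 ≤ x) (hC : 0 ≤ C)
    (hy : y ≤ C * x ^ ε) (hκ : 0 < κ) (m : ℕ) :
    y / x ^ 2 * (log x ^ m / m.factorial) ≤ C * κ⁻¹ ^ m * x ^ (-(2 - ε - κ)) := by
  have hx0 : 0 < x := by linarith
  have hlog : 0 ≤ log x := log_nonneg hx
  calc y / x ^ 2 * (log x ^ m / m.factorial)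
      ≤ C * x ^ ε / x ^ 2 * (x ^ κ * κ⁻¹ ^ m) := by
        gcongr
        exact log_pow_div_factorial_le hx hκ m
    _ = C * κ⁻¹ ^ m * x ^ (-(2 - ε - κ)) := by
        rw [show -(2 - ε - κ) = ε - 2 + κ by ring, rpow_add hx0, rpow_sub hx0, rpow_two]
        ring

theorem taylorCoeff_le {c : ℕ → ℝ} {C ε : ℝ} (hC : 0 ≤ C)
    (hc : ∀ k, k ≠ 0 → c k ≤ C * (k : ℝ) ^ ε) {T₁ T₂ : Set ℕ}
    (hsupp : ∀ k, k ≠ 0 → c k ≠ 0 → k ∈ T₁ ∨ k ∈ T₂) {κ₁ κ₂ B₁ B₂ : ℝ} (hκ₁ : 0 < κ₁) (hκ₂ : 0 < κ₂)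
    (hB₁ : ∀ S : Finset ℕ, (S : Set ℕ) ⊆ T₁ → ∑ k ∈ S, (k : ℝ) ^ (-(2 - ε - κ₁)) ≤ B₁)
    (hB₂ : ∀ S : Finset ℕ, (S : Set ℕ) ⊆ T₂ → ∑ k ∈ S, (k : ℝ) ^ (-(2 - ε - κ₂)) ≤ B₂) (m : ℕ) :
    taylorCoeff c m ≤ C * (B₁ * κ₁⁻¹ ^ m + B₂ * κ₂⁻¹ ^ m) := by
  classical
  let f (κ : ℝ) (k : ℕ) : ℝ := C * κ⁻¹ ^ m * (k : ℝ) ^ (-(2 - ε - κ))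
  have hf {κ : ℝ} (hκ : 0 < κ) (k : ℕ) : 0 ≤ f κ k := by positivity
  have hB₁0 : 0 ≤ B₁ := by simpa using hB₁ ∅
  have hB₂0 : 0 ≤ B₂ := by simpa using hB₂ ∅
  have hterm (k : ℕ) : c k / (k : ℝ) ^ 2 * (log k ^ m / m.factorial) ≤
      (if k ∈ T₁ then f κ₁ k else 0) + if k ∈ T₂ then f κ₂ k else 0 := by
    have h₁ : 0 ≤ if k ∈ T₁ then f κ₁ k else 0 := by split_ifs <;> simp [hf hκ₁]
    have h₂ : 0 ≤ if k ∈ T₂ then f κ₂ k else 0 := by split_ifs <;> simp [hf hκ₂]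
    rcases eq_or_ne k 0 with rfl | hk
    · simpa using add_nonneg h₁ h₂
    rcases eq_or_ne (c k) 0 with hck | hck
    · simpa [hck] using add_nonneg h₁ h₂
    have hbound {κ : ℝ} (hκ : 0 < κ) : c k / (k : ℝ) ^ 2 * (log k ^ m / m.factorial) ≤ f κ k :=
      div_sq_mul_log_pow_div_factorial_le (by exact_mod_cast Nat.one_le_iff_ne_zero.2 hk) hC
        (hc k hk) hκ m
    rcases hsupp k hk hck with h | h
    · rw [if_pos h]
      linarith [hbound hκ₁]
    · rw [if_pos h]
      linarith [hbound hκ₂]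
  refine tsum_le_of_sum_le' (by positivity) fun S ↦ (Finset.sum_le_sum fun k _ ↦ hterm k).trans ?_
  rw [Finset.sum_add_distrib, ← Finset.sum_filter, ← Finset.sum_filter, ← Finset.mul_sum,
    ← Finset.mul_sum]
  calc _ ≤ C * κ₁⁻¹ ^ m * B₁ + C * κ₂⁻¹ ^ m * B₂ := by
        gcongr
        · exact hB₁ _ fun k hk ↦ (Finset.mem_filter.1 hk).2
        · exact hB₂ _ fun k hk ↦ (Finset.mem_filter.1 hk).2
    _ = _ := by ring

theorem sum_isSquare_rpow_neg_le {s : ℝ} (hs : 1 < 2 * s) (S : Finset ℕ)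
    (hS : (S : Set ℕ) ⊆ {k | IsSquare k}) :
    ∑ k ∈ S, (k : ℝ) ^ (-s) ≤ ∑' j : ℕ, (j : ℝ) ^ (-(2 * s)) := by
  have hsqrt (k) (hk : k ∈ S) : Nat.sqrt k ^ 2 = k := by
    obtain ⟨j, rfl⟩ := hS hk
    rw [Nat.sqrt_eq, sq]
  have hinj : Set.InjOn Nat.sqrt S := fun x hx y hy hxy ↦ by
    rw [← hsqrt x hx, ← hsqrt y hy, hxy]
  calc ∑ k ∈ S, (k : ℝ) ^ (-s) = ∑ j ∈ S.image Nat.sqrt, (j : ℝ) ^ (-(2 * s)) := by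
        rw [Finset.sum_image hinj]
        refine Finset.sum_congr rfl fun k hk ↦ ?_
        conv_lhs => rw [← hsqrt k hk]
        rw [Nat.cast_pow, ← rpow_natCast, ← rpow_mul (by positivity)]
        ring_nf
    _ ≤ _ := (summable_nat_rpow.2 (by linarith)).sum_le_tsum _ fun _ _ ↦ by positivity

theorem exists_taylorCoeff_le : ∃ K : ℝ, 0 ≤ K ∧ ∀ C : ℝ, 0 ≤ C → ∀ a n : ℤ, IsUnit a → 3 ≤ n →
    ∀ c : ℕ → ℝ, (∀ k, k ≠ 0 → c k ≤ C * (k : ℝ) ^ (1 / 2000 : ℝ)) →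
    (∀ k, k ≠ 0 → c k ≠ 0 → IsSquare k ∨ k ∈ reducedNormRoots a n) → ∀ m,
    taylorCoeff c m ≤ C * K * ((4 / 5) ^ m + (n : ℝ) ^ (-(1 / 2) : ℝ) * (1000 / 999) ^ m) := by
  obtain ⟨K, hK, hsparse⟩ :=
    exists_sum_reducedNormRoots_rpow_neg_le (s := 2 - 1 / 2000 - 999 / 1000) (by norm_num)
  let Z : ℝ := ∑' j : ℕ, (j : ℝ) ^ (-(2 * (2 - 1 / 2000 - 5 / 4) : ℝ))
  have hZ : 0 ≤ Z := by positivity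
  refine ⟨K + Z, by positivity, fun C hC a n ha hn c hc hsupp m ↦ ?_⟩
  have : (0 : ℝ) ≤ n := by exact_mod_cast (by lia : 0 ≤ n)
  calc taylorCoeff c m ≤
        C * (Z * (5 / 4)⁻¹ ^ m + K * (n : ℝ) ^ (-(1 / 2) : ℝ) * (999 / 1000)⁻¹ ^ m) :=
        taylorCoeff_le hC hc hsupp (by norm_num) (by norm_num)
          (sum_isSquare_rpow_neg_le (by norm_num)) (hsparse a n ha hn) m
    _ ≤ C * ((K + Z) * (4 / 5) ^ m + (K + Z) * (n : ℝ) ^ (-(1 / 2) : ℝ) * (1000 / 999) ^ m) := by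
        rw [inv_div, inv_div]
        gcongr <;> linarith
    _ = _ := by ring

theorem natCast_rpow_neg_half_le {n : ℕ} (hn : n ≠ 0) :
    (n : ℝ) ^ (-(1 / 2) : ℝ) ≤ (5 / 7) ^ Nat.log 2 n := by
  have hpow : (2 : ℝ) ^ Nat.log 2 n ≤ n := by exact_mod_cast Nat.pow_log_le_self 2 hn
  have hsqrt : (7 / 5 : ℝ) ≤ √2 := le_sqrt_of_sq_le (by norm_num)
  calc (n : ℝ) ^ (-(1 / 2) : ℝ) ≤ ((2 : ℝ) ^ Nat.log 2 n) ^ (-(1 / 2) : ℝ) :=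
        rpow_le_rpow_of_nonpos (by positivity) hpow (by norm_num)
    _ = (√2)⁻¹ ^ Nat.log 2 n := by
        rw [← rpow_pow_comm zero_le_two, rpow_neg zero_le_two, ← sqrt_eq_rpow]
    _ ≤ (7 / 5)⁻¹ ^ Nat.log 2 n := by gcongr
    _ = (5 / 7) ^ Nat.log 2 n := by rw [inv_div]

theorem natCast_pow_eight_le (n : ℕ) : (n : ℝ) ^ 8 ≤ 256 * 256 ^ Nat.log 2 n := by
  have hlt : (n : ℝ) ≤ 2 ^ (Nat.log 2 n + 1) := by
    exact_mod_cast (Nat.lt_pow_succ_log_self one_lt_two n).le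
  calc (n : ℝ) ^ 8 ≤ (2 ^ (Nat.log 2 n + 1)) ^ 8 := by gcongr
    _ = 256 * 256 ^ Nat.log 2 n := by
      rw [← pow_mul, mul_comm (Nat.log 2 n + 1), pow_mul]
      ring

theorem pow_thirtyFive_mul_error_le {K : ℝ} (hK : 0 ≤ K) (j : ℕ) :
    (1001 / 1000) ^ (35 * j) *
        (K * ((4 / 5) ^ (35 * j) + (5 / 7) ^ j * (1000 / 999) ^ (35 * j)) +
          6 * (256 * 256 ^ j) * (3 / 4) ^ (35 * j)) +
      40 * (256 * 256 ^ j) * (27 / 32) ^ (35 * j) ≤ (2 * K + 46 * 256) * (4 / 5) ^ j := by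
  have hpow {x y : ℝ} (hx : 0 ≤ x) (hy : 0 ≤ y) (hxy : x ^ 35 * y ≤ 4 / 5) :
      x ^ (35 * j) * y ^ j ≤ (4 / 5) ^ j := by
    rw [pow_mul, ← mul_pow]
    gcongr
  calc _ = K * ((1001 / 1000 * (4 / 5)) ^ (35 * j) * 1 ^ j +
            (1001 / 1000 * (1000 / 999)) ^ (35 * j) * (5 / 7) ^ j) +
          6 * 256 * ((1001 / 1000 * (3 / 4)) ^ (35 * j) * 256 ^ j) +
          40 * 256 * ((27 / 32) ^ (35 * j) * 256 ^ j) := by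
        simp only [mul_pow, one_pow]
        ring
    _ ≤ K * ((4 / 5) ^ j + (4 / 5) ^ j) + 6 * 256 * (4 / 5) ^ j + 40 * 256 * (4 / 5) ^ j := by
        gcongr <;> exact hpow (by norm_num) (by norm_num) (by norm_num)
    _ = (2 * K + 46 * 256) * (4 / 5) ^ j := by ring

/-- With about `35 * log₂ n` Taylor coefficients, the truncation error beats the bound `C * n ^ 8`,
while `(1000 / 999) ^ m` does not yet destroy the saving `n ^ (-1 / 2)` from sparsity. -/
theorem exists_one_sub_le_mul_pow_log : ∃ K : ℝ, 0 ≤ K ∧ ∀ C : ℝ, 0 ≤ C → ∀ (a : ℤ) (n : ℕ),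
    IsUnit a → 3 ≤ n → ∀ (c : ℕ → ℝ) (A : ℂ → ℂ), EntireContinuation c A → (∀ k, 0 ≤ c k) →
    c 1 = 1 → (∀ k, k ≠ 0 → c k ≤ C * (k : ℝ) ^ (1 / 2000 : ℝ)) →
    (∀ k, k ≠ 0 → c k ≠ 0 → IsSquare k ∨ k ∈ reducedNormRoots a n) →
    (∀ s ∈ sphere (2 : ℂ) (4 / 3), ‖A s‖ ≤ C * (n : ℝ) ^ 8) →
    ∀ β : ℝ, 999 / 1000 ≤ β → β < 1 → 0 ≤ (A β).re →
    1 - β ≤ C * K * (4 / 5) ^ Nat.log 2 n := by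
  obtain ⟨K, hK, hupper⟩ := exists_taylorCoeff_le
  refine ⟨2 * K + 46 * 256, by positivity, fun C hC a n ha hn c A hA hc0 hc1 hc hsupp hM β hβ hβ1
    hAβ ↦ ?_⟩
  set j := Nat.log 2 n
  have hj : 35 * j ≠ 0 := mul_ne_zero (by norm_num) (Nat.log_pos one_lt_two (by lia)).ne'
  have hM' (s) (hs : s ∈ sphere (2 : ℂ) (4 / 3)) : ‖A s‖ ≤ C * (256 * 256 ^ j) :=
    (hM s hs).trans (mul_le_mul_of_nonneg_left (natCast_pow_eight_le n) hC)
  have htaylor : taylorCoeff c (35 * j) ≤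
      C * K * ((4 / 5) ^ (35 * j) + (5 / 7) ^ j * (1000 / 999) ^ (35 * j)) := by
    refine (hupper C hC a n ha (by exact_mod_cast hn) c hc hsupp (35 * j)).trans ?_
    gcongr
    exact_mod_cast natCast_rpow_neg_half_le (by lia)
  calc 1 - β ≤ (2 - β) ^ (35 * j) * (taylorCoeff c (35 * j) +
        6 * (C * (256 * 256 ^ j)) * (3 / 4) ^ (35 * j)) +
        40 * (C * (256 * 256 ^ j)) * (27 / 32) ^ (35 * j) :=
        hA.one_sub_le hc0 hc1 hM' (by linarith) hβ1 hAβ hj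
    _ ≤ (1001 / 1000) ^ (35 * j) *
          (C * K * ((4 / 5) ^ (35 * j) + (5 / 7) ^ j * (1000 / 999) ^ (35 * j)) +
            6 * (C * (256 * 256 ^ j)) * (3 / 4) ^ (35 * j)) +
        40 * (C * (256 * 256 ^ j)) * (27 / 32) ^ (35 * j) := by
        have := taylorCoeff_nonneg hc0 (35 * j)
        gcongr <;> linarith
    _ ≤ C * (2 * K + 46 * 256) * (4 / 5) ^ j := by
        linarith [mul_le_mul_of_nonneg_left (pow_thirtyFive_mul_error_le hK j) hC]

end UpperBound

section LFunctionBound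

open Complex Filter Topology Metric LSeries

theorem norm_ofReal_cpow_neg_sub_le {s : ℂ} (hs : -1 ≤ s.re) {x y : ℝ} (hx : 0 < x) (hxy : x ≤ y) :
    ‖(y : ℂ) ^ (-s) - (x : ℂ) ^ (-s)‖ ≤ ‖s‖ * x ^ (-(s.re + 1)) * (y - x) := by
  have hderiv (t) (ht : t ∈ Set.Icc x y) : HasDerivWithinAt (fun t : ℝ ↦ (t : ℂ) ^ (-s))
      (-s * (t : ℂ) ^ (-s - 1)) (Set.Icc x y) t := by
    have ht0 : (t : ℂ) ∈ slitPlane := by simpa using hx.trans_le ht.1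
    simpa using ((hasDerivAt_id (t : ℂ)).cpow_const (c := -s) ht0).comp_ofReal.hasDerivWithinAt
  have hle := (convex_Icc x y).norm_image_sub_le_of_norm_hasDerivWithin_le
    (C := ‖s‖ * x ^ (-(s.re + 1))) hderiv (fun t ht ↦ ?_)
    (Set.left_mem_Icc.2 hxy) (Set.right_mem_Icc.2 hxy)
  · rwa [Real.norm_of_nonneg (sub_nonneg.2 hxy)] at hle
  · rw [norm_mul, norm_neg, norm_cpow_eq_rpow_re_of_pos (hx.trans_le ht.1), sub_re, neg_re, one_re,
      ← neg_add']
    gcongr ?_ * ?_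
    exact Real.rpow_le_rpow_of_nonpos hx ht.1 (by linarith)

theorem norm_natCast_cpow_neg_le_one {s : ℂ} (hs : 0 ≤ s.re) {n : ℕ} (hn : n ≠ 0) :
    ‖(n : ℂ) ^ (-s)‖ ≤ 1 := by
  rw [norm_natCast_cpow_of_pos hn.bot_lt]
  exact Real.rpow_le_one_of_one_le_of_nonpos (by exact_mod_cast Nat.one_le_iff_ne_zero.2 hn)
    (by simpa using hs)

theorem term_eq_mul_cpow_neg (f : ℕ → ℂ) (s : ℂ) {n : ℕ} (hn : n ≠ 0) :
    term f s n = f n * (n : ℂ) ^ (-s) := by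
  rw [term_of_ne_zero hn, cpow_neg, div_eq_mul_inv]

variable {N : ℕ} {χ : DirichletCharacter ℂ N}

variable (χ) in
/-- The part of the Dirichlet series of `χ` over the `k`-th period `k * N ≤ n < (k + 1) * N`. The
series of these blocks converges on the larger half-plane `0 < re s`. -/
def dirichletBlock (k : ℕ) (s : ℂ) : ℂ :=
  ∑ r : Fin N, term (fun n : ℕ ↦ χ n) s (k * N + r)

theorem norm_dirichletBlock_zero_le {s : ℂ} (hs : 0 ≤ s.re) : ‖dirichletBlock χ 0 s‖ ≤ N := by
  have hterm (r : Fin N) : ‖term (fun n : ℕ ↦ χ n) s (0 * N + r)‖ ≤ 1 := by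
    rw [zero_mul, zero_add]
    rcases eq_or_ne (r : ℕ) 0 with hr | hr
    · simp [hr]
    · rw [term_eq_mul_cpow_neg _ _ hr, norm_mul]
      exact mul_le_one₀ (χ.norm_le_one _) (norm_nonneg _) (norm_natCast_cpow_neg_le_one hs hr)
  simpa [dirichletBlock] using norm_sum_le_of_le Finset.univ fun r _ ↦ hterm r

variable [NeZero N]

theorem sum_fin_eq_zero_of_ne_one (hχ : χ ≠ 1) : ∑ r : Fin N, χ (r : ℕ) = 0 := by
  rw [← MulChar.sum_eq_zero_of_ne_one hχ]
  refine Fintype.sum_equiv (ZMod.finEquiv N).toEquiv _ _ fun r ↦ ?_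
  obtain ⟨N, rfl⟩ := Nat.exists_eq_succ_of_ne_zero (NeZero.ne N)
  exact congrArg χ (Fin.cast_val_eq_self r)

/-- Since `χ` sums to zero over a period, each `n ^ (-s)` may be replaced by
`n ^ (-s) - (k * N) ^ (-s)`. -/
theorem norm_dirichletBlock_le (hχ : χ ≠ 1) {s : ℂ} (hs : 0 ≤ s.re) {k : ℕ} (hk : k ≠ 0) :
    ‖dirichletBlock χ k s‖ ≤ N * (‖s‖ * (k : ℝ) ^ (-(s.re + 1))) := by
  have hN : (1 : ℝ) ≤ N := by exact_mod_cast NeZero.one_le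
  have hkN : k * N ≠ 0 := mul_ne_zero hk (NeZero.ne N)
  have hblock : dirichletBlock χ k s = ∑ r : Fin N,
      χ (r : ℕ) * (((k * N + r : ℕ) : ℂ) ^ (-s) - ((k * N : ℕ) : ℂ) ^ (-s)) := by
    simp only [mul_sub, Finset.sum_sub_distrib, ← Finset.sum_mul, sum_fin_eq_zero_of_ne_one hχ,
      zero_mul, sub_zero]
    refine Finset.sum_congr rfl fun r _ ↦ ?_
    rw [term_eq_mul_cpow_neg _ _ (by lia)]
    simp
  have hterm (r : Fin N) : ‖χ (r : ℕ) * (((k * N + r : ℕ) : ℂ) ^ (-s) - ((k * N : ℕ) : ℂ) ^ (-s))‖ ≤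
      ‖s‖ * (k : ℝ) ^ (-(s.re + 1)) := by
    have hdiff := norm_ofReal_cpow_neg_sub_le (s := s) (x := (k * N : ℕ)) (y := (k * N + r : ℕ))
      (by linarith) (by exact_mod_cast hkN.bot_lt) (by exact_mod_cast Nat.le_add_right _ _)
    simp only [ofReal_natCast] at hdiff
    have hr : (N : ℝ) ^ (-(s.re + 1)) * (r : ℕ) ≤ 1 := by
      calc (N : ℝ) ^ (-(s.re + 1)) * (r : ℕ) ≤ (N : ℝ) ^ (-1 : ℝ) * N := by
            gcongr
            · linarith
            · exact r.2.le
        _ = 1 := by rw [Real.rpow_neg_one, inv_mul_cancel₀ (by positivity)]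
    rw [norm_mul]
    refine (mul_le_of_le_one_left (norm_nonneg _) (χ.norm_le_one _)).trans (hdiff.trans ?_)
    rw [Nat.cast_add, add_sub_cancel_left, Nat.cast_mul,
      Real.mul_rpow (by positivity) (by positivity)]
    calc _ = ‖s‖ * (k : ℝ) ^ (-(s.re + 1)) * ((N : ℝ) ^ (-(s.re + 1)) * (r : ℕ)) := by ring
      _ ≤ _ := mul_le_of_le_one_right (by positivity) hr
  rw [hblock]
  simpa using norm_sum_le_of_le Finset.univ fun r _ ↦ hterm r

theorem norm_dirichletBlock_le_of_le (hχ : χ ≠ 1) {s : ℂ} {σ R : ℝ} (hσ : 0 ≤ σ) (hs : σ ≤ s.re)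
    (hR : ‖s‖ ≤ R) (k : ℕ) :
    ‖dirichletBlock χ k s‖ ≤ N * ((if k = 0 then 1 else 0) + R * (k : ℝ) ^ (-(σ + 1))) := by
  split_ifs with hk
  · subst hk
    simpa [Real.zero_rpow (by linarith : -1 + -σ ≠ 0)]
      using norm_dirichletBlock_zero_le (hσ.trans hs)
  · refine (norm_dirichletBlock_le hχ (hσ.trans hs) hk).trans ?_
    have : (1 : ℝ) ≤ k := by exact_mod_cast Nat.one_le_iff_ne_zero.2 hk
    rw [zero_add]
    have := (norm_nonneg s).trans hR
    gcongr

theorem summable_blockBound {σ : ℝ} (hσ : 0 < σ) (R : ℝ) :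
    Summable fun k : ℕ ↦ (if k = 0 then 1 else 0) + R * (k : ℝ) ^ (-(σ + 1)) :=
  (summable_of_ne_finset_zero (s := {0}) fun k hk ↦ by simpa using hk).add
    ((Real.summable_nat_rpow.2 (by linarith)).mul_left R)

theorem LFunction_eq_tsum_dirichletBlock_of_one_lt_re {s : ℂ} (hs : 1 < s.re) :
    χ.LFunction s = ∑' k, dirichletBlock χ k s := by
  have hsum : Summable (term (fun n : ℕ ↦ χ n) s ∘ (Nat.divModEquiv N).symm) :=
    (Nat.divModEquiv N).symm.summable_iff.2 (χ.LSeriesSummable_of_one_lt_re hs)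
  have htsum := hsum.tsum_prod
  simp only [tsum_fintype] at htsum
  rw [χ.LFunction_eq_LSeries hs, LSeries, ← (Nat.divModEquiv N).symm.tsum_eq]
  exact htsum

theorem LFunction_eq_tsum_dirichletBlock (hχ : χ ≠ 1) {s : ℂ} (hs : 0 < s.re) :
    χ.LFunction s = ∑' k, dirichletBlock χ k s := by
  let σ : ℝ := min (s.re / 2) 1
  have hσ : 0 < σ := lt_min (by linarith) one_pos
  let U : Set ℂ := {w | σ < w.re} ∩ ball 0 (‖s‖ + 3)
  have hU : IsOpen U := (isOpen_lt continuous_const continuous_re).inter isOpen_ball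
  have hUconn : IsPreconnected U :=
    ((convex_halfSpace_re_gt σ).inter (convex_ball 0 _)).isPreconnected
  have hsU : s ∈ U := ⟨(min_le_left _ _).trans_lt (half_lt_self hs), by simp⟩
  have h2U : (2 : ℂ) ∈ U := ⟨show σ < (2 : ℂ).re from (min_le_right _ _).trans_lt one_lt_two, by
    simpa using (by linarith [norm_nonneg s] : (2 : ℝ) < ‖s‖ + 3)⟩
  have hdiff : DifferentiableOn ℂ (fun w ↦ ∑' k, dirichletBlock χ k w) U := by
    refine differentiableOn_tsum_of_summable_norm
      ((summable_blockBound hσ (‖s‖ + 3)).mul_left (N : ℝ)) (fun k ↦ ?_) hU fun k w hw ↦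
        norm_dirichletBlock_le_of_le hχ hσ.le hw.1.le (mem_ball_zero_iff.1 hw.2).le k
    exact DifferentiableOn.fun_sum fun r _ w _ ↦
      (hasDerivAt_term _ _ _).differentiableAt.differentiableWithinAt
  have heq : χ.LFunction =ᶠ[𝓝 2] fun w ↦ ∑' k, dirichletBlock χ k w := by
    filter_upwards [(isOpen_lt continuous_const continuous_re).mem_nhds
      (show (2 : ℂ) ∈ {w : ℂ | 1 < w.re} by simp)] with w hw
    exact LFunction_eq_tsum_dirichletBlock_of_one_lt_re hw
  exact ((χ.differentiable_LFunction hχ).differentiableOn.analyticOnNhd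
    hU).eqOn_of_preconnected_of_eventuallyEq (hdiff.analyticOnNhd hU) hUconn h2U heq hsU

theorem norm_LFunction_le (hχ : χ ≠ 1) {s : ℂ} {σ R : ℝ} (hσ : 0 < σ) (hs : σ ≤ s.re)
    (hR : ‖s‖ ≤ R) :
    ‖χ.LFunction s‖ ≤ N * ∑' k : ℕ, ((if k = 0 then 1 else 0) + R * (k : ℝ) ^ (-(σ + 1))) := by
  rw [LFunction_eq_tsum_dirichletBlock hχ (hσ.trans_le hs), ← tsum_mul_left]
  exact tsum_of_norm_bounded ((summable_blockBound hσ R).mul_left (N : ℝ)).hasSum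
    (norm_dirichletBlock_le_of_le hχ hσ.le hs hR)

theorem two_thirds_le_re_of_mem_sphere {s : ℂ} (hs : s ∈ sphere (2 : ℂ) (4 / 3)) :
    2 / 3 ≤ s.re := by
  have h := (abs_le.1 ((abs_re_le_norm (s - 2)).trans (mem_sphere_iff_norm.1 hs).le)).1
  rw [sub_re, re_ofNat] at h
  linarith

theorem norm_sub_le_of_mem_sphere {s : ℂ} (hs : s ∈ sphere (2 : ℂ) (4 / 3)) (c : ℂ) :
    ‖s - c‖ ≤ 4 / 3 + ‖2 - c‖ := by
  rw [← mem_sphere_iff_norm.1 hs, ← sub_add_sub_cancel s 2 c]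
  exact norm_add_le _ _

theorem exists_norm_LFunction_le : ∃ C : ℝ, 0 ≤ C ∧ ∀ (N : ℕ) [NeZero N]
    (χ : DirichletCharacter ℂ N), χ ≠ 1 →
      ∀ s ∈ sphere (2 : ℂ) (4 / 3), ‖χ.LFunction s‖ ≤ C * N := by
  refine ⟨∑' k : ℕ, ((if k = 0 then 1 else 0) + 10 / 3 * (k : ℝ) ^ (-(2 / 3 + 1) : ℝ)),
    tsum_nonneg fun k ↦ by positivity, fun N _ χ hχ s hs ↦ ?_⟩
  rw [mul_comm]
  refine norm_LFunction_le hχ (by norm_num) (two_thirds_le_re_of_mem_sphere hs) ?_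
  have := norm_sub_le_of_mem_sphere hs 0
  norm_num at this
  exact this

theorem norm_prod_primeFactors_le {s : ℂ} (hs : 0 ≤ s.re) {N : ℕ} (hN : N ≠ 0) :
    ‖∏ p ∈ N.primeFactors, (1 - (p : ℂ) ^ (-s))‖ ≤ N := by
  rw [norm_prod]
  calc ∏ p ∈ N.primeFactors, ‖1 - (p : ℂ) ^ (-s)‖ ≤ ∏ p ∈ N.primeFactors, (p : ℝ) := by
        refine Finset.prod_le_prod (fun _ _ ↦ norm_nonneg _) fun p hp ↦ (norm_sub_le _ _).trans ?_
        have hp' := Nat.prime_of_mem_primeFactors hp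
        have : (2 : ℝ) ≤ p := by exact_mod_cast hp'.two_le
        rw [norm_one]
        linarith [norm_natCast_cpow_neg_le_one hs hp'.ne_zero]
    _ ≤ N := by
        rw [← Nat.cast_prod]
        exact_mod_cast Nat.le_of_dvd hN.bot_lt (Nat.prod_primeFactors_dvd N)

theorem exists_norm_LFunctionTrivChar₁_le : ∃ C : ℝ, 0 ≤ C ∧ ∀ (N : ℕ) [NeZero N],
    ∀ s ∈ sphere (2 : ℂ) (4 / 3), ‖DirichletCharacter.LFunctionTrivChar₁ N s‖ ≤ C * N := by
  obtain ⟨C, hC⟩ := (isCompact_sphere (2 : ℂ) (4 / 3)).exists_bound_of_continuousOn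
    (f := fun s ↦ (s - 1) * riemannZeta s) fun s hs ↦ ((continuousAt_id.sub continuousAt_const).mul
      (differentiableAt_riemannZeta (ne_one_of_mem_sphere_two hs)).continuousAt).continuousWithinAt
  have hC0 : 0 ≤ C := (norm_nonneg _).trans (hC (2 + (4 / 3 : ℝ)) (by simp))
  refine ⟨C, hC0, fun N _ s hs ↦ ?_⟩
  have hs1 := ne_one_of_mem_sphere_two hs
  rw [DirichletCharacter.LFunctionTrivChar₁, Function.update_of_ne hs1,
    DirichletCharacter.LFunctionTrivChar_eq_mul_riemannZeta hs1, mul_left_comm, mul_comm C,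
    norm_mul]
  gcongr
  · exact norm_prod_primeFactors_le (by linarith [two_thirds_le_re_of_mem_sphere hs]) (NeZero.ne N)
  · exact hC s hs

end LFunctionBound

section CharacterConvolution

open ArithmeticFunction Finset

variable {N : ℕ} {χ ψ : DirichletCharacter ℤ N} {p : ℕ}

theorem mul_apply_prime_pow {R : Type*} [Semiring R] (f g : ArithmeticFunction R) (hp : p.Prime)
    (k : ℕ) : (f * g) (p ^ k) = ∑ i ∈ range (k + 1), f (p ^ i) * g (p ^ (k - i)) := by
  rw [ArithmeticFunction.mul_apply, Nat.sum_divisorsAntidiagonal (f := fun a b ↦ f a * g b),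
    Nat.sum_divisors_prime_pow hp]
  refine sum_congr rfl fun i hi ↦ ?_
  rw [Nat.pow_div (Nat.lt_succ_iff.1 (mem_range.1 hi)) hp.pos]

theorem abs_mul_apply_le {f g : ArithmeticFunction ℤ} {n : ℕ} {B C : ℤ}
    (hf : ∀ d, d ∣ n → |f d| ≤ B) (hg : ∀ d, d ∣ n → |g d| ≤ C) :
    |(f * g) n| ≤ #n.divisors * (B * C) := by
  have hB : 0 ≤ B := (abs_nonneg _).trans (hf 1 (one_dvd n))
  rw [ArithmeticFunction.mul_apply, ← Nat.map_div_right_divisors]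
  refine (abs_sum_le_sum_abs _ _).trans ((sum_le_card_nsmul _ _ (B * C) fun x hx ↦ ?_).trans_eq ?_)
  · rw [Nat.map_div_right_divisors] at hx
    have hx := (Nat.mem_divisorsAntidiagonal.1 hx).1
    rw [abs_mul]
    exact mul_le_mul (hf _ ⟨_, hx.symm⟩) (hg _ (Dvd.intro_left _ hx)) (abs_nonneg _) hB
  · rw [card_map, nsmul_eq_mul]

theorem nonneg_of_prime_pow_nonneg {f : ArithmeticFunction ℤ} (hf : f.IsMultiplicative)
    (h : ∀ p : ℕ, p.Prime → ∀ k, 0 ≤ f (p ^ k)) (n : ℕ) : 0 ≤ f n := by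
  rcases eq_or_ne n 0 with rfl | hn
  · exact f.map_zero.ge
  · rw [hf.multiplicative_factorization _ hn]
    exact prod_nonneg fun p hp ↦ h p (Nat.prime_of_mem_primeFactors hp) _

/-- A Dirichlet character as an arithmetic function, so that Dirichlet convolution is available. -/
def charFunction (χ : DirichletCharacter ℤ N) : ArithmeticFunction ℤ :=
  toArithmeticFunction fun n ↦ χ (n : ZMod N)

theorem charFunction_apply (χ : DirichletCharacter ℤ N) {n : ℕ} (hn : n ≠ 0) :
    charFunction χ n = χ (n : ZMod N) :=
  (DirichletCharacter.apply_eq_toArithmeticFunction_apply χ hn).symm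

theorem isMultiplicative_charFunction (χ : DirichletCharacter ℤ N) :
    (charFunction χ).IsMultiplicative :=
  DirichletCharacter.isMultiplicative_toArithmeticFunction χ

theorem abs_charFunction_le_one (hχ : χ.IsQuadratic) (n : ℕ) : |charFunction χ n| ≤ 1 := by
  rcases eq_or_ne n 0 with rfl | hn
  · simp
  · rw [charFunction_apply χ hn]
    rcases hχ n with h | h | h <;> simp [h]

theorem isQuadratic_one (N : ℕ) : (1 : DirichletCharacter ℤ N).IsQuadratic :=
  MulChar.isQuadratic_iff_sq_eq_one.2 (one_pow 2)

/-- The Dirichlet coefficients of `L(s, 1) L(s, χ)`; here `1` is the principal character mod `N`. -/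
def quadraticCoeff (χ : DirichletCharacter ℤ N) : ArithmeticFunction ℤ :=
  charFunction (1 : DirichletCharacter ℤ N) * charFunction χ

/-- The Dirichlet coefficients of `L(s, 1) L(s, χ) L(s, ψ) L(s, χψ)`, the Dirichlet series Siegel
attaches to a pair of quadratic characters. -/
def biquadraticCoeff (χ ψ : DirichletCharacter ℤ N) : ArithmeticFunction ℤ :=
  quadraticCoeff ψ * (charFunction χ * charFunction (χ * ψ))

theorem isMultiplicative_quadraticCoeff (χ : DirichletCharacter ℤ N) :
    (quadraticCoeff χ).IsMultiplicative :=
  (isMultiplicative_charFunction 1).mul (isMultiplicative_charFunction χ)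

theorem isMultiplicative_biquadraticCoeff (χ ψ : DirichletCharacter ℤ N) :
    (biquadraticCoeff χ ψ).IsMultiplicative :=
  (isMultiplicative_quadraticCoeff ψ).mul
    ((isMultiplicative_charFunction χ).mul (isMultiplicative_charFunction (χ * ψ)))

theorem biquadraticCoeff_comm (χ ψ : DirichletCharacter ℤ N) :
    biquadraticCoeff χ ψ = biquadraticCoeff ψ χ := by
  simp only [biquadraticCoeff, quadraticCoeff, mul_comm χ ψ]
  ring

theorem charFunction_mul_charFunction_mul_apply (χ ψ : DirichletCharacter ℤ N) (n : ℕ) :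
    (charFunction χ * charFunction (χ * ψ)) n = χ (n : ZMod N) * quadraticCoeff ψ n := by
  rw [quadraticCoeff, ArithmeticFunction.mul_apply, ArithmeticFunction.mul_apply, mul_sum]
  refine sum_congr rfl fun x hx ↦ ?_
  obtain ⟨hxn, hn⟩ := Nat.mem_divisorsAntidiagonal.1 hx
  rw [← hxn, mul_ne_zero_iff] at hn
  rw [charFunction_apply _ hn.1, charFunction_apply _ hn.2, charFunction_apply _ hn.1,
    charFunction_apply _ hn.2, ← hxn, MulChar.mul_apply, Nat.cast_mul, map_mul]
  by_cases hu : IsUnit (x.1 : ZMod N)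
  · rw [MulChar.one_apply hu]
    ring
  · simp [MulChar.map_nonunit _ hu]

theorem quadraticCoeff_prime_pow (χ : DirichletCharacter ℤ N) (hp : p.Prime) (k : ℕ) :
    quadraticCoeff χ (p ^ k) = ∑ i ∈ range (k + 1),
      (1 : DirichletCharacter ℤ N) (p : ZMod N) ^ i * χ (p : ZMod N) ^ (k - i) := by
  rw [quadraticCoeff, mul_apply_prime_pow _ _ hp]
  refine sum_congr rfl fun i _ ↦ ?_
  rw [charFunction_apply _ (pow_ne_zero _ hp.ne_zero),
    charFunction_apply _ (pow_ne_zero _ hp.ne_zero), Nat.cast_pow, Nat.cast_pow, map_pow, map_pow]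

theorem one_apply_natCast_of_ne_zero (h : χ (p : ZMod N) ≠ 0) :
    (1 : DirichletCharacter ℤ N) (p : ZMod N) = 1 :=
  MulChar.one_apply (by_contra fun hu ↦ h (MulChar.map_nonunit χ hu))

theorem quadraticCoeff_prime_pow_of_eq_zero (hp : p.Prime) (h : χ (p : ZMod N) = 0) {k : ℕ}
    (hk : k ≠ 0) : quadraticCoeff χ (p ^ k) = 0 := by
  have hu (hu : IsUnit (p : ZMod N)) : False := (hu.map χ).ne_zero h
  rw [quadraticCoeff_prime_pow χ hp, h, MulChar.map_nonunit _ hu]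
  refine sum_eq_zero fun i _ ↦ ?_
  rw [← pow_add, zero_pow (by lia)]

theorem quadraticCoeff_prime_pow_of_eq_neg_one (hp : p.Prime) (h : χ (p : ZMod N) = -1) (k : ℕ) :
    quadraticCoeff χ (p ^ k) = if Even k then 1 else 0 := by
  rw [quadraticCoeff_prime_pow χ hp, h, one_apply_natCast_of_ne_zero (h.trans_ne (by simp))]
  simp only [one_pow, one_mul]
  rw [← sum_range_reflect, sum_congr rfl (g := fun i ↦ (-1 : ℤ) ^ i), neg_one_geom_sum]
  · simp only [Nat.even_add_one, ite_not]
  · intro i hi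
    rw [mem_range] at hi
    congr 1
    lia

theorem quadraticCoeff_nonneg (hχ : χ.IsQuadratic) (n : ℕ) : 0 ≤ quadraticCoeff χ n := by
  refine nonneg_of_prime_pow_nonneg (isMultiplicative_quadraticCoeff χ) (fun p hp k ↦ ?_) n
  rcases hχ p with h | h | h
  · rcases eq_or_ne k 0 with rfl | hk
    · simp [(isMultiplicative_quadraticCoeff χ).map_one]
    · exact (quadraticCoeff_prime_pow_of_eq_zero hp h hk).ge
  · rw [quadraticCoeff_prime_pow χ hp, h, one_apply_natCast_of_ne_zero (h.trans_ne one_ne_zero)]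
    exact sum_nonneg fun i _ ↦ by simp
  · rw [quadraticCoeff_prime_pow_of_eq_neg_one hp h]
    split_ifs <;> simp

theorem biquadraticCoeff_prime_pow_nonneg (hψ : ψ.IsQuadratic) (hp : p.Prime)
    (h : 0 ≤ χ (p : ZMod N)) (k : ℕ) : 0 ≤ biquadraticCoeff χ ψ (p ^ k) := by
  rw [biquadraticCoeff, mul_apply_prime_pow _ _ hp]
  refine sum_nonneg fun i _ ↦ mul_nonneg (quadraticCoeff_nonneg hψ _) ?_
  rw [charFunction_mul_charFunction_mul_apply, Nat.cast_pow, map_pow]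
  exact mul_nonneg (pow_nonneg h _) (quadraticCoeff_nonneg hψ _)

theorem biquadraticCoeff_nonneg (hχ : χ.IsQuadratic) (hψ : ψ.IsQuadratic) (n : ℕ) :
    0 ≤ biquadraticCoeff χ ψ n := by
  refine nonneg_of_prime_pow_nonneg (isMultiplicative_biquadraticCoeff χ ψ) (fun p hp k ↦ ?_) n
  rcases le_or_gt 0 (χ (p : ZMod N)) with h | hχp
  · exact biquadraticCoeff_prime_pow_nonneg hψ hp h k
  rcases le_or_gt 0 (ψ (p : ZMod N)) with h | hψp
  · rw [biquadraticCoeff_comm]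
    exact biquadraticCoeff_prime_pow_nonneg hχ hp h k
  have hχp : χ (p : ZMod N) = -1 := by rcases hχ p with h | h | h <;> lia
  have hψp : ψ (p : ZMod N) = -1 := by rcases hψ p with h | h | h <;> lia
  rw [biquadraticCoeff, mul_apply_prime_pow _ _ hp]
  refine sum_nonneg fun i _ ↦ mul_nonneg (quadraticCoeff_nonneg hψ _) ?_
  rw [charFunction_mul_charFunction_mul_apply, Nat.cast_pow, map_pow, hχp,
    quadraticCoeff_prime_pow_of_eq_neg_one hp hψp]
  split_ifs with h
  · simp [h.neg_one_pow]
  · simp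

theorem apply_eq_one_of_quadraticCoeff_ne_zero (hχ : χ.IsQuadratic) {n : ℕ}
    (h : quadraticCoeff χ n ≠ 0) (hp : p.Prime) (hodd : Odd (n.factorization p)) :
    χ (p : ZMod N) = 1 := by
  have hn : n ≠ 0 := by
    rintro rfl
    exact h (quadraticCoeff χ).map_zero
  have hpow : quadraticCoeff χ (p ^ n.factorization p) ≠ 0 := by
    rw [← Nat.ordProj_mul_ordCompl_eq_self n p,
      (isMultiplicative_quadraticCoeff χ).map_mul_of_coprime
        ((Nat.coprime_ordCompl hp hn).pow_left _)] at h
    exact left_ne_zero_of_mul h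
  rcases hχ p with h0 | h1 | h2
  · exact absurd (quadraticCoeff_prime_pow_of_eq_zero hp h0 hodd.pos.ne') hpow
  · exact h1
  · rw [quadraticCoeff_prime_pow_of_eq_neg_one hp h2, if_neg (Nat.not_even_iff_odd.2 hodd)] at hpow
    exact absurd rfl hpow

theorem apply_eq_one_of_biquadraticCoeff_ne_zero (hψ : ψ.IsQuadratic) {n : ℕ}
    (h : biquadraticCoeff χ ψ n ≠ 0) (hp : p.Prime) (hodd : Odd (n.factorization p)) :
    ψ (p : ZMod N) = 1 := by
  rw [biquadraticCoeff, ArithmeticFunction.mul_apply] at h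
  obtain ⟨x, hx, hmul⟩ := exists_ne_zero_of_sum_ne_zero h
  obtain ⟨rfl, hne⟩ := Nat.mem_divisorsAntidiagonal.1 hx
  rw [mul_ne_zero_iff] at hne
  rw [charFunction_mul_charFunction_mul_apply, mul_ne_zero_iff, mul_ne_zero_iff] at hmul
  rw [Nat.factorization_mul hne.1 hne.2, Finsupp.add_apply] at hodd
  by_cases h1 : Odd (x.1.factorization p)
  · exact apply_eq_one_of_quadraticCoeff_ne_zero hψ hmul.1 hp h1
  · exact apply_eq_one_of_quadraticCoeff_ne_zero hψ hmul.2.2 hp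
      ((Nat.odd_add'.1 hodd).2 (Nat.not_odd_iff_even.1 h1))

theorem abs_quadraticCoeff_le (hχ : χ.IsQuadratic) (n : ℕ) :
    |quadraticCoeff χ n| ≤ #n.divisors := by
  refine (abs_mul_apply_le (fun d _ ↦ abs_charFunction_le_one (isQuadratic_one N) d)
    fun d _ ↦ abs_charFunction_le_one hχ d).trans_eq ?_
  rw [mul_one, mul_one]

theorem abs_biquadraticCoeff_le (hχ : χ.IsQuadratic) (hψ : ψ.IsQuadratic) {n : ℕ} (hn : n ≠ 0) :
    |biquadraticCoeff χ ψ n| ≤ #n.divisors ^ 3 := by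
  have hquad (d : ℕ) (hd : d ∣ n) : |quadraticCoeff ψ d| ≤ #n.divisors :=
    (abs_quadraticCoeff_le hψ d).trans
      (by exact_mod_cast card_le_card (Nat.divisors_subset_of_dvd hn hd))
  refine (abs_mul_apply_le hquad fun d hd ↦ ?_).trans_eq (by ring)
  rw [charFunction_mul_charFunction_mul_apply, abs_mul]
  have hle : |χ (d : ZMod N)| ≤ 1 := by rcases hχ d with h | h | h <;> simp [h]
  exact (mul_le_of_le_one_left (abs_nonneg _) hle).trans (hquad d hd)

end CharacterConvolution

section JacobiCharacter

open DirichletCharacter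
open scoped NumberTheorySymbols

theorem odd_val_of_isUnit {D : ℕ} [NeZero D] {x : ZMod (4 * D)} (hx : IsUnit x) : Odd x.val := by
  rw [← ZMod.natCast_zmod_val x, ZMod.isUnit_iff_coprime] at hx
  exact Nat.coprime_two_left.1 (hx.coprime_dvd_right ⟨2 * D, by ring⟩).symm

open Classical in
/-- The Jacobi symbol `J(D | ·)`, which by quadratic reciprocity is a Dirichlet character modulo
`4 * D`. -/
def jacobiCharacter (D : ℕ) [NeZero D] : DirichletCharacter ℤ (4 * D) where
  toFun x := if IsUnit x then J(D | x.val) else 0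
  map_one' := by
    have : Fact (1 < 4 * D) := ⟨by have := NeZero.pos D; lia⟩
    simp [ZMod.val_one]
  map_mul' x y := by
    by_cases hxy : IsUnit x ∧ IsUnit y
    · have hx := odd_val_of_isUnit hxy.1
      have hy := odd_val_of_isUnit hxy.2
      rw [if_pos (IsUnit.mul_iff.2 hxy), if_pos hxy.1, if_pos hxy.2, ZMod.val_mul,
        ← jacobiSym.mod_right' D (hx.mul hy), jacobiSym.mul_right' _ hx.pos.ne' hy.pos.ne']
    · rw [if_neg (mt IsUnit.mul_iff.1 hxy)]
      rcases not_and_or.1 hxy with h | h <;> simp [h]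
  map_nonunit' x hx := if_neg hx

variable {D N m p : ℕ} [NeZero D]

theorem jacobiCharacter_natCast (hm : m.Coprime (4 * D)) : jacobiCharacter D m = J(D | m) := by
  have hodd : Odd m := Nat.coprime_two_left.1 (hm.coprime_dvd_right ⟨2 * D, by ring⟩).symm
  rw [jacobiSym.mod_right' D hodd, ← ZMod.val_natCast]
  exact if_pos ((ZMod.isUnit_iff_coprime _ _).2 hm)

theorem isQuadratic_changeLevel {M : ℕ} {χ : DirichletCharacter ℤ M} (hχ : χ.IsQuadratic)
    (h : M ∣ N) : (changeLevel h χ).IsQuadratic :=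
  MulChar.isQuadratic_iff_sq_eq_one.2 (by rw [← map_pow, hχ.sq_eq_one, map_one])

theorem isQuadratic_jacobiCharacter : (jacobiCharacter D).IsQuadratic := by
  intro x
  by_cases hx : IsUnit x
  · rw [show jacobiCharacter D x = J(D | x.val) from if_pos hx]
    exact jacobiSym.trichotomy _ _
  · exact Or.inl (MulChar.map_nonunit _ hx)

theorem changeLevel_natCast {M : ℕ} (χ : DirichletCharacter ℤ M) (h : M ∣ N) (hm : m.Coprime N) :
    changeLevel h χ m = χ m := by
  simpa using changeLevel_eq_cast_of_dvd' χ h (Nat.isCoprime_iff_coprime.2 hm)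

theorem isSquare_of_changeLevel_jacobiCharacter_eq_one (h : 4 * D ∣ N) (hp : p.Prime)
    (h1 : changeLevel h (jacobiCharacter D) p = 1) : p.Coprime N ∧ IsSquare (D : ZMod p) := by
  have : Fact p.Prime := ⟨hp⟩
  have hcop : p.Coprime N := by
    by_contra hcop
    rw [MulChar.map_nonunit _ (mt (ZMod.isUnit_iff_coprime p N).1 hcop)] at h1
    exact zero_ne_one h1
  refine ⟨hcop, by_contra fun hsq ↦ ?_⟩
  have hneg : legendreSym p D = -1 := (legendreSym.eq_neg_one_iff p).2 (by simpa using hsq)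
  rw [changeLevel_natCast _ h hcop, jacobiCharacter_natCast (hcop.coprime_dvd_right h),
    ← jacobiSym.legendreSym.to_jacobiSym, hneg] at h1
  norm_num at h1

theorem eq_of_mul_eq_one_of_isQuadratic {χ ψ : DirichletCharacter ℤ N} (hψ : ψ.IsQuadratic)
    (h : χ * ψ = 1) : χ = ψ := by
  rw [eq_inv_of_mul_eq_one_left h, hψ.inv]

end JacobiCharacter

section Nontriviality

open DirichletCharacter
open scoped NumberTheorySymbols

theorem exists_prime_gt_jacobiSym_mul_eq_neg_one {p b : ℕ} (hp : p.Prime) (hp2 : p ≠ 2)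
    (hpb : p.Coprime b) (hb : b ≠ 0) (N : ℕ) :
    ∃ q > N, q.Prime ∧ J((p * b : ℕ) | q) = -1 := by
  have : Fact p.Prime := ⟨hp⟩
  have hp4 : (4 * b).Coprime p :=
    (((Nat.coprime_primes Nat.prime_two hp).2 hp2.symm).pow_left 2).mul_left hpb.symm
  obtain ⟨c, hc⟩ := FiniteField.exists_nonsquare (F := ZMod p) (by rwa [ZMod.ringChar_zmod_n])
  have hc0 : c ≠ 0 := by
    rintro rfl
    exact hc IsSquare.zero
  -- By reciprocity it suffices that `q ≡ 1` modulo `4 * b` and that `q` is a nonresidue modulo `p`.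
  obtain ⟨e, he1, hec⟩ := Nat.chineseRemainder hp4 1 c.val
  have hce : e.Coprime (4 * b * p) := by
    refine Nat.Coprime.mul_right (he1.gcd_eq.trans (Nat.gcd_one_left _)) ?_
    rw [Nat.Coprime, hec.gcd_eq]
    exact (ZMod.isUnit_iff_coprime _ _).1 (by simpa using hc0)
  obtain ⟨q, hqN, hq, hqe⟩ := Nat.forall_exists_prime_gt_and_modEq N
    (mul_ne_zero (mul_ne_zero four_ne_zero hb) hp.ne_zero) hce
  have hq1 : q ≡ 1 [MOD 4 * b] := (hqe.of_mul_right p).trans he1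
  have hq4 : q % 4 = 1 := hq1.of_mul_right b
  have hqc : ((q : ℤ) : ZMod p) = c := by
    rw [Int.cast_natCast, (ZMod.natCast_eq_natCast_iff _ _ _).2 ((hqe.of_mul_left _).trans hec),
      ZMod.natCast_zmod_val]
  have hJp : J(p | q) = -1 := by
    rw [jacobiSym.quadratic_reciprocity_one_mod_four' (hp.odd_of_ne_two hp2) hq4,
      ← jacobiSym.legendreSym.to_jacobiSym, legendreSym.eq_neg_one_iff, hqc]
    exact hc
  have hJb : J(b | q) = 1 := by
    rw [jacobiSym.mod_right' b (Nat.odd_iff.2 (by lia)), hq1, Nat.mod_eq_of_lt (by lia),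
      jacobiSym.one_right]
  exact ⟨q, hqN, hq, by rw [Nat.cast_mul, jacobiSym.mul_left, hJp, hJb, mul_one]⟩

theorem exists_prime_gt_jacobiSym_two_eq_neg_one (N : ℕ) :
    ∃ q > N, q.Prime ∧ J(2 | q) = -1 := by
  obtain ⟨q, hqN, hq, hq8⟩ := Nat.forall_exists_prime_gt_and_modEq N (q := 8) (a := 5)
    (by norm_num) (by norm_num)
  refine ⟨q, hqN, hq, ?_⟩
  have hodd : q % 2 = 1 := (hq8.of_dvd (by norm_num : 2 ∣ 8) : q % 2 = 5 % 2)
  rw [jacobiSym.at_two (Nat.odd_iff.2 hodd), (ZMod.natCast_eq_natCast_iff q 5 8).2 hq8]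
  rfl

theorem eq_two_of_squarefree_of_forall_prime_dvd {m : ℕ} (hm : Squarefree m) (hm1 : m ≠ 1)
    (h : ∀ p : ℕ, p.Prime → p ∣ m → p = 2) : m = 2 := by
  rw [← Nat.prod_primeFactors_of_squarefree hm, Finset.prod_eq_single_of_mem 2]
  · obtain ⟨p, hp, hpm⟩ := Nat.exists_prime_and_dvd hm1
    rw [← h p hp hpm]
    exact Nat.mem_primeFactors.2 ⟨hp, hpm, hm.ne_zero⟩
  · exact fun p hp hp2 ↦
      absurd (h p (Nat.prime_of_mem_primeFactors hp) (Nat.dvd_of_mem_primeFactors hp)) hp2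

theorem exists_prime_gt_jacobiSym_eq_neg_one {D : ℕ} (hD : ¬IsSquare D) (N : ℕ) :
    ∃ q > N, q.Prime ∧ J(D | q) = -1 := by
  obtain ⟨m, r, hrm, hm⟩ := Nat.sq_mul_squarefree D
  have hr : r ≠ 0 := by
    rintro rfl
    exact hD (by simp [← hrm])
  have hm1 : m ≠ 1 := by
    rintro rfl
    exact hD ⟨r, by rw [← hrm, mul_one, sq]⟩
  obtain ⟨q, hqN, hq, hJ⟩ : ∃ q > N + r, q.Prime ∧ J(m | q) = -1 := by
    by_cases hodd : ∀ p : ℕ, p.Prime → p ∣ m → p = 2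
    · rw [eq_two_of_squarefree_of_forall_prime_dvd hm hm1 hodd]
      exact exists_prime_gt_jacobiSym_two_eq_neg_one _
    · push Not at hodd
      obtain ⟨p, hp, ⟨b, rfl⟩, hp2⟩ := hodd
      exact exists_prime_gt_jacobiSym_mul_eq_neg_one hp hp2 (Nat.squarefree_mul_iff.1 hm).1
        (right_ne_zero_of_mul hm.ne_zero) _
  refine ⟨q, by lia, hq, ?_⟩
  have hrq : Int.gcd r q = 1 := (Nat.coprime_of_lt_prime hr (by lia) hq).symm
  rw [← hrm, Nat.cast_mul, Nat.cast_pow, jacobiSym.mul_left, hJ, jacobiSym.pow_left,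
    jacobiSym.sq_one hrq, one_mul]

theorem jacobiCharacter_ne_one {D : ℕ} [NeZero D] (hD : ¬IsSquare D) : jacobiCharacter D ≠ 1 := by
  obtain ⟨q, hqD, hq, hJ⟩ := exists_prime_gt_jacobiSym_eq_neg_one hD (4 * D)
  have hcop : q.Coprime (4 * D) := Nat.coprime_of_lt_prime (NeZero.ne _) hqD hq
  intro h
  rw [← jacobiCharacter_natCast hcop, h, MulChar.one_apply ((ZMod.isUnit_iff_coprime _ _).2 hcop)]
    at hJ
  norm_num at hJ

end Nontriviality

section LocalNorms

open QuadraticAlgebra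

theorem isSquare_intCast_zmod_mul {D : ℤ} {m n : ℕ} (hmn : m.Coprime n)
    (hm : IsSquare (D : ZMod m)) (hn : IsSquare (D : ZMod n)) : IsSquare (D : ZMod (m * n)) := by
  have : IsSquare (D : ZMod m × ZMod n) := by
    obtain ⟨x, hx⟩ := hm
    obtain ⟨y, hy⟩ := hn
    exact ⟨(x, y), by ext <;> simp [hx, hy]⟩
  simpa only [map_intCast] using this.map (ZMod.chineseRemainder hmn).symm

theorem isSquare_intCast_zmod_of_squarefree {D : ℤ} {s : ℕ} (hs : Squarefree s)
    (h : ∀ p : ℕ, p.Prime → p ∣ s → IsSquare (D : ZMod p)) : IsSquare (D : ZMod s) := by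
  induction s using induction_on_primes with
  | zero => simp at hs
  | one => exact ⟨0, Subsingleton.elim _ _⟩
  | prime_mul p m hp ih =>
    obtain ⟨hpm, -, hm⟩ := Nat.squarefree_mul_iff.1 hs
    exact isSquare_intCast_zmod_mul hpm (h p hp (dvd_mul_right p m))
      (ih hm fun q hq hqm ↦ h q hq (hqm.mul_left p))

variable {a n : ℤ}

theorem exists_dvd_norm_of_isSquare_zmod {s : ℕ} (hs2 : IsCoprime (s : ℤ) 2)
    (h : IsSquare ((n ^ 2 + 4 * a : ℤ) : ZMod s)) :
    ∃ t : ℤ, (s : ℤ) ∣ norm (⟨t, 1⟩ : QuadraticAlgebra ℤ a n) := by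
  have h2 : IsUnit (2 : ZMod s) := by simpa using (ZMod.coe_int_isUnit_iff_isCoprime 2 s).2 hs2
  obtain ⟨x, hx⟩ := h
  obtain ⟨y, hy⟩ := h2.dvd (a := x - n)
  obtain ⟨t, rfl⟩ := ZMod.intCast_surjective y
  refine ⟨t, (ZMod.intCast_zmod_eq_zero_iff_dvd _ _).1 ((h2.pow 2).mul_left_cancel ?_)⟩
  rw [norm_def]
  push_cast at hx ⊢
  linear_combination (-x - 2 * t - n) * hy - hx

theorem mem_reducedNormRoots_of_squarefree (ha : IsUnit a) (hn : 3 ≤ n)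
    (htor : ∀ g : ClassGroup (QOrder (n ^ 2 + 4 * a)), g ^ 2 = 1) {s : ℕ} (hs : 1 < s)
    (hsf : Squarefree s) (hs2 : IsCoprime (s : ℤ) 2) (hdisc : IsCoprime (s : ℤ) (n ^ 2 + 4 * a))
    (hsq : ∀ p : ℕ, p.Prime → p ∣ s → IsSquare ((n ^ 2 + 4 * a : ℤ) : ZMod p)) :
    s ∈ reducedNormRoots a n := by
  obtain ⟨t, ht⟩ := exists_dvd_norm_of_isSquare_zmod hs2
    (isSquare_intCast_zmod_of_squarefree hsf hsq)
  exact mem_reducedNormRoots_of_dvd_norm ha hn htor hs ht isCoprime_one_right hdisc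

theorem isSquare_or_mem_reducedNormRoots (ha : IsUnit a) (hn : 3 ≤ n)
    (htor : ∀ g : ClassGroup (QOrder (n ^ 2 + 4 * a)), g ^ 2 = 1) {D N : ℕ} [NeZero D]
    (hD : (D : ℤ) = n ^ 2 + 4 * a) (h : 4 * D ∣ N) {k : ℕ} (hk : k ≠ 0)
    (hodd : ∀ p : ℕ, p.Prime → Odd (k.factorization p) →
      DirichletCharacter.changeLevel h (jacobiCharacter D) p = 1) :
    IsSquare k ∨ k ∈ reducedNormRoots a n := by
  obtain ⟨s, t, rfl, hsf⟩ := Nat.sq_mul_squarefree k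
  have ht : t ^ 2 ≠ 0 := left_ne_zero_of_mul hk
  have hlocal (p : ℕ) (hp : p.Prime) (hps : p ∣ s) : p.Coprime N ∧ IsSquare (D : ZMod p) := by
    refine isSquare_of_changeLevel_jacobiCharacter_eq_one h hp (hodd p hp ?_)
    have h1 := hsf.natFactorization_le_one p
    have h2 := (hp.dvd_iff_one_le_factorization hsf.ne_zero).1 hps
    rw [Nat.factorization_mul ht hsf.ne_zero, Nat.factorization_pow, Finsupp.add_apply,
      Finsupp.smul_apply, smul_eq_mul, le_antisymm h1 h2]
    exact odd_two_mul_add_one _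
  rcases eq_or_ne s 1 with rfl | hs1
  · exact Or.inl ⟨t, by ring⟩
  have hcop : s.Coprime N := Nat.coprime_of_dvd fun p hp hps hpN ↦
    hp.one_lt.ne' ((hlocal p hp hps).1.eq_one_of_dvd hpN)
  refine Or.inr (mul_mem_reducedNormRoots ht (mem_reducedNormRoots_of_squarefree ha hn htor
    (by have := hsf.ne_zero; lia) hsf ?_ ?_ fun p hp hps ↦ ?_))
  · exact Nat.isCoprime_iff_coprime.2 (hcop.coprime_dvd_right (dvd_trans ⟨2 * D, by ring⟩ h))
  · rw [← hD]
    exact Nat.isCoprime_iff_coprime.2 (hcop.coprime_dvd_right (dvd_trans (dvd_mul_left D 4) h))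
  · rw [← hD]
    simpa using (hlocal p hp hps).2

end LocalNorms

section QuadraticZeta

open Complex Metric DirichletCharacter

variable {M N : ℕ} (χ ψ : DirichletCharacter ℤ N)

/-- An integer-valued Dirichlet character viewed as a complex-valued one, to which Mathlib's
L-functions apply. -/
abbrev complexChar : DirichletCharacter ℂ N :=
  χ.ringHomComp (Int.castRingHom ℂ)

variable {χ ψ} in
theorem complexChar_ne_one (h : χ ≠ 1) : complexChar χ ≠ 1 :=
  (MulChar.ringHomComp_ne_one_iff (RingHom.injective_int _)).2 h

theorem complexChar_changeLevel (χ : DirichletCharacter ℤ M) (h : M ∣ N) :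
    complexChar (changeLevel h χ) = changeLevel h (complexChar χ) := by
  ext u
  simp [changeLevel_eq_cast_of_dvd]

variable [NeZero N]

/-- The entire function `(s - 1) L(s, 1) L(s, χ)`, where `1` is the principal character
mod `N`. -/
def quadraticZeta (s : ℂ) : ℂ :=
  LFunctionTrivChar₁ N s * (complexChar χ).LFunction s

/-- The entire function `(s - 1) L(s, 1) L(s, χ) L(s, ψ) L(s, χψ)`, where `1` is the principal
character mod `N`. -/
def biquadraticZeta (s : ℂ) : ℂ :=
  quadraticZeta ψ s * ((complexChar χ).LFunction s * (complexChar (χ * ψ)).LFunction s)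

variable {χ ψ}

theorem LFunctionTrivChar₁_eq {s : ℂ} (hs : s ≠ 1) :
    LFunctionTrivChar₁ N s = (s - 1) * LFunction (1 : DirichletCharacter ℂ N) s :=
  Function.update_of_ne hs _ _

theorem LSeriesHasSum_charFunction (χ : DirichletCharacter ℤ N) {s : ℂ} (hs : 1 < s.re) :
    LSeriesHasSum (fun k ↦ (charFunction χ k : ℂ)) s ((complexChar χ).LFunction s) := by
  rw [LFunction_eq_LSeries _ hs]
  refine (LSeriesHasSum_congr _ _ fun {n} hn ↦ ?_).1
    (LSeriesSummable_of_one_lt_re (complexChar χ) hs).LSeriesHasSum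
  simp [charFunction_apply χ hn]

theorem LSeriesHasSum_intCast_mul {f g : ArithmeticFunction ℤ} {s x y : ℂ}
    (hf : LSeriesHasSum (fun k ↦ (f k : ℂ)) s x) (hg : LSeriesHasSum (fun k ↦ (g k : ℂ)) s y) :
    LSeriesHasSum (fun k ↦ ((f * g) k : ℂ)) s (x * y) := by
  simpa only [← ArithmeticFunction.intCoe_mul, ArithmeticFunction.intCoe_apply] using
    ArithmeticFunction.LSeriesHasSum_mul (f := (f : ArithmeticFunction ℂ))
      (g := (g : ArithmeticFunction ℂ)) hf hg

theorem LSeriesHasSum_quadraticCoeff (χ : DirichletCharacter ℤ N) {s : ℂ} (hs : 1 < s.re) :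
    LSeriesHasSum (fun k ↦ (quadraticCoeff χ k : ℂ)) s (quadraticZeta χ s / (s - 1)) := by
  have hs1 : s ≠ 1 := by
    rintro rfl
    simp at hs
  have h := LSeriesHasSum_intCast_mul (LSeriesHasSum_charFunction (1 : DirichletCharacter ℤ N) hs)
    (LSeriesHasSum_charFunction χ hs)
  rwa [complexChar, MulChar.ringHomComp_one,
    ← mul_div_cancel_left₀ (LFunction 1 s) (sub_ne_zero.2 hs1), ← LFunctionTrivChar₁_eq hs1,
    div_mul_eq_mul_div] at h

theorem entireContinuation_quadraticZeta (hχ : χ ≠ 1) :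
    EntireContinuation (fun k ↦ (quadraticCoeff χ k : ℝ)) (quadraticZeta χ) where
  differentiable := (differentiable_LFunctionTrivChar₁ N).mul
    (differentiable_LFunction (complexChar_ne_one hχ))
  hasSum s hs := by simpa using LSeriesHasSum_quadraticCoeff χ hs

theorem entireContinuation_biquadraticZeta (hχ : χ ≠ 1) (hψ : ψ ≠ 1) (hχψ : χ * ψ ≠ 1) :
    EntireContinuation (fun k ↦ (biquadraticCoeff χ ψ k : ℝ)) (biquadraticZeta χ ψ) where
  differentiable := (entireContinuation_quadraticZeta hψ).differentiable.mul
    ((differentiable_LFunction (complexChar_ne_one hχ)).mul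
      (differentiable_LFunction (complexChar_ne_one hχψ)))
  hasSum s hs := by
    have h := LSeriesHasSum_intCast_mul (LSeriesHasSum_quadraticCoeff ψ hs)
      (LSeriesHasSum_intCast_mul (LSeriesHasSum_charFunction χ hs)
        (LSeriesHasSum_charFunction (χ * ψ) hs))
    rw [div_mul_eq_mul_div] at h
    simpa only [ofReal_intCast, biquadraticCoeff, biquadraticZeta] using h

theorem exists_norm_quadraticZeta_le : ∃ C : ℝ, 0 ≤ C ∧ ∀ (N : ℕ) [NeZero N]
    (χ : DirichletCharacter ℤ N), χ ≠ 1 → ∀ s ∈ sphere (2 : ℂ) (4 / 3),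
      ‖quadraticZeta χ s‖ ≤ C * (N : ℝ) ^ 2 := by
  obtain ⟨C₁, hC₁, htriv⟩ := exists_norm_LFunctionTrivChar₁_le
  obtain ⟨C₂, hC₂, hL⟩ := exists_norm_LFunction_le
  refine ⟨C₁ * C₂, mul_nonneg hC₁ hC₂, fun N _ χ hχ s hs ↦ ?_⟩
  calc ‖quadraticZeta χ s‖ ≤ C₁ * N * (C₂ * N) :=
        norm_mul_le_of_le (htriv N s hs) (hL N _ (complexChar_ne_one hχ) s hs)
    _ = C₁ * C₂ * (N : ℝ) ^ 2 := by ring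

theorem exists_norm_biquadraticZeta_le : ∃ C : ℝ, 0 ≤ C ∧ ∀ (N : ℕ) [NeZero N]
    (χ ψ : DirichletCharacter ℤ N), χ ≠ 1 → ψ ≠ 1 → χ * ψ ≠ 1 → ∀ s ∈ sphere (2 : ℂ) (4 / 3),
      ‖biquadraticZeta χ ψ s‖ ≤ C * (N : ℝ) ^ 4 := by
  obtain ⟨C₁, hC₁, hzeta⟩ := exists_norm_quadraticZeta_le
  obtain ⟨C₂, -, hL⟩ := exists_norm_LFunction_le
  refine ⟨C₁ * C₂ ^ 2, by positivity, fun N _ χ ψ hχ hψ hχψ s hs ↦ ?_⟩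
  calc ‖biquadraticZeta χ ψ s‖ ≤ C₁ * (N : ℝ) ^ 2 * (C₂ * N * (C₂ * N)) :=
        norm_mul_le_of_le (hzeta N ψ hψ s hs) (norm_mul_le_of_le
          (hL N _ (complexChar_ne_one hχ) s hs) (hL N _ (complexChar_ne_one hχψ) s hs))
    _ = C₁ * C₂ ^ 2 * (N : ℝ) ^ 4 := by ring

theorem exists_quadraticZeta_eq_zero (hχ : χ.IsQuadratic) (hχ1 : χ ≠ 1) {x : ℝ} (hx : x ≤ 1)
    (hneg : (quadraticZeta χ x).re < 0) : ∃ β ∈ Set.Ioo x 1, quadraticZeta χ β = 0 := by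
  refine (entireContinuation_quadraticZeta hχ1).exists_zero_of_re_neg
    (fun k ↦ Int.cast_nonneg (quadraticCoeff_nonneg hχ k)) ?_ hx hneg
  exact mul_ne_zero (LFunctionTrivChar₁_apply_one_ne_zero N)
    (LFunction_apply_one_ne_zero (complexChar_ne_one hχ1))

theorem quadraticZeta_changeLevel_eq_zero [NeZero M] {χ : DirichletCharacter ℤ M} (h : M ∣ N)
    {s : ℂ} (hs : s ≠ 1) (h0 : quadraticZeta χ s = 0) : quadraticZeta (changeLevel h χ) s = 0 := by
  have htriv := LFunction_changeLevel h (1 : DirichletCharacter ℂ M) (Or.inr hs)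
  rw [map_one] at htriv
  rw [quadraticZeta, LFunctionTrivChar₁_eq hs, mul_eq_zero, mul_eq_zero] at h0 ⊢
  rw [complexChar_changeLevel, htriv, LFunction_changeLevel h _ (Or.inr hs)]
  exact h0.imp (Or.imp_right fun h1 ↦ mul_eq_zero_of_left h1 _) fun hχ ↦ mul_eq_zero_of_left hχ _

theorem biquadraticZeta_eq_zero {s : ℂ} (h : quadraticZeta χ s = 0) :
    biquadraticZeta χ ψ s = 0 := by
  rcases mul_eq_zero.1 h with h1 | h1 <;> simp [biquadraticZeta, quadraticZeta, h1]

end QuadraticZeta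

section Siegel

open Filter Metric DirichletCharacter

/-- The indices `n` such that the class group of the order of discriminant `n ^ 2 + 4 * a` is
`2`-torsion. The two families of unit-generated orders are `a = -1` and `a = 1`. -/
def twoTorsionIndices (a : ℤ) : Set ℕ :=
  {n | ∀ g : ClassGroup (QOrder ((n : ℤ) ^ 2 + 4 * a)), g ^ 2 = 1}

theorem eventually_mul_pow_log_two_lt {r ε : ℝ} (hr : 0 ≤ r) (hr1 : r < 1) (hε : 0 < ε) (C : ℝ) :
    ∀ᶠ n : ℕ in atTop, C * r ^ Nat.log 2 n < ε := by
  have hlog : Tendsto (Nat.log 2) atTop atTop :=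
    tendsto_atTop_atTop.2 fun j ↦ ⟨2 ^ j, fun n hn ↦ Nat.le_log_of_pow_le one_lt_two hn⟩
  have hlim := ((tendsto_pow_atTop_nhds_zero_of_lt_one hr hr1).comp hlog).const_mul C
  rw [mul_zero] at hlim
  exact hlim.eventually_lt_const hε

theorem exists_card_divisors_pow_three_le : ∃ C : ℝ, 0 ≤ C ∧ ∀ m : ℕ, m ≠ 0 →
    (m.divisors.card : ℝ) ^ 3 ≤ C * (m : ℝ) ^ (1 / 2000 : ℝ) := by
  obtain ⟨C, hC, h⟩ := exists_card_divisors_le_mul_rpow (ε := 1 / 6000) (by norm_num)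
  refine ⟨C ^ 3, by positivity, fun m hm ↦ ?_⟩
  calc (m.divisors.card : ℝ) ^ 3 ≤ (C * (m : ℝ) ^ (1 / 6000 : ℝ)) ^ 3 := by gcongr; exact h m hm
    _ = C ^ 3 * (m : ℝ) ^ (1 / 2000 : ℝ) := by
        rw [mul_pow, ← Real.rpow_mul_natCast m.cast_nonneg]
        norm_num

variable {a : ℤ} {β : ℝ}

theorem eventually_re_neg (ha : IsUnit a) (hβ : 999 / 1000 ≤ β) (hβ1 : β < 1) {C : ℝ}
    (hC : 0 ≤ C) : ∀ᶠ n : ℕ in atTop, ∀ (c : ℕ → ℝ) (A : ℂ → ℂ), EntireContinuation c A →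
      (∀ k, 0 ≤ c k) → c 1 = 1 → (∀ k, k ≠ 0 → c k ≤ C * (k : ℝ) ^ (1 / 2000 : ℝ)) →
      (∀ k, k ≠ 0 → c k ≠ 0 → IsSquare k ∨ k ∈ reducedNormRoots a n) →
      (∀ s ∈ sphere (2 : ℂ) (4 / 3), ‖A s‖ ≤ C * (n : ℝ) ^ 8) → (A β).re < 0 := by
  obtain ⟨K, -, hK⟩ := exists_one_sub_le_mul_pow_log
  filter_upwards [eventually_ge_atTop 3, eventually_mul_pow_log_two_lt (r := 4 / 5) (by norm_num)
    (by norm_num) (sub_pos.2 hβ1) (C * K)] with n hn hlt c A h hc hc1 hcC hsupp hA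
  by_contra! hre
  exact (hK C hC a n ha hn c A h hc hc1 hcC hsupp hA β hβ hβ1 hre).not_gt hlt

theorem exists_natCast_eq_of_three_le (ha : IsUnit a) {n : ℕ} (hn : 3 ≤ n) :
    ∃ D : ℕ, D ≠ 0 ∧ ¬IsSquare D ∧ (D : ℤ) = (n : ℤ) ^ 2 + 4 * a ∧ (D : ℝ) ≤ 2 * (n : ℝ) ^ 2 := by
  have hn' : 3 ≤ (n : ℤ) := by exact_mod_cast hn
  obtain ⟨D, hD0, hD, hD2⟩ := exists_natCast_eq_sq_add_four_mul ha hn'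
  refine ⟨D, hD0, fun hsq ↦ not_isSquare_sq_add_four_mul ha hn' ?_, hD, by exact_mod_cast hD2⟩
  rw [← hD]
  exact hsq.map (Nat.castRingHom ℤ)

theorem eventually_re_neg_of_mem_twoTorsionIndices (ha : IsUnit a) (hβ : 999 / 1000 ≤ β)
    (hβ1 : β < 1) {C : ℝ} (hC : 0 ≤ C) (B : ℝ) : ∀ᶠ n : ℕ in atTop, n ∈ twoTorsionIndices a →
      ∀ (D N : ℕ) [NeZero D] (h : 4 * D ∣ N), (D : ℤ) = (n : ℤ) ^ 2 + 4 * a →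
      (N : ℝ) ≤ B * (n : ℝ) ^ 2 → ∀ (f : ArithmeticFunction ℤ) (A : ℂ → ℂ),
      EntireContinuation (fun k ↦ (f k : ℝ)) A → (∀ k, 0 ≤ f k) → f 1 = 1 →
      (∀ k, k ≠ 0 → |f k| ≤ (k.divisors.card : ℤ) ^ 3) →
      (∀ k p : ℕ, f k ≠ 0 → p.Prime → Odd (k.factorization p) →
        changeLevel h (jacobiCharacter D) p = 1) →
      (∀ s ∈ sphere (2 : ℂ) (4 / 3), ‖A s‖ ≤ C * (N : ℝ) ^ 4) → (A β).re < 0 := by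
  obtain ⟨C', hC', hcard⟩ := exists_card_divisors_pow_three_le
  filter_upwards [eventually_ge_atTop 3, eventually_re_neg ha hβ hβ1 (C := C * B ^ 4 + C')
    (by positivity)] with n hn hneg htor D N _ h hD hN f A hA hf hf1 hfcard hfsupp hAN
  refine hneg _ A hA (fun k ↦ Int.cast_nonneg (hf k)) (by simp [hf1]) (fun k hk ↦ ?_)
    (fun k hk hfk ↦ ?_) fun s hs ↦ ?_
  · calc (f k : ℝ) ≤ (k.divisors.card : ℝ) ^ 3 := by
          exact_mod_cast (le_abs_self _).trans (hfcard k hk)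
      _ ≤ C' * (k : ℝ) ^ (1 / 2000 : ℝ) := hcard k hk
      _ ≤ (C * B ^ 4 + C') * (k : ℝ) ^ (1 / 2000 : ℝ) := by
          gcongr
          exact le_add_of_nonneg_left (by positivity)
  · exact isSquare_or_mem_reducedNormRoots ha (by exact_mod_cast hn) htor hD h hk fun p ↦
      hfsupp k p (by exact_mod_cast hfk)
  · calc ‖A s‖ ≤ C * (N : ℝ) ^ 4 := hAN s hs
      _ ≤ C * (B * (n : ℝ) ^ 2) ^ 4 := by gcongr
      _ = C * B ^ 4 * (n : ℝ) ^ 8 := by ring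
      _ ≤ (C * B ^ 4 + C') * (n : ℝ) ^ 8 := by
          gcongr
          exact le_add_of_nonneg_right hC'

theorem eventually_re_quadraticZeta_neg (ha : IsUnit a) (hβ : 999 / 1000 ≤ β) (hβ1 : β < 1)
    (B : ℝ) : ∀ᶠ n : ℕ in atTop, n ∈ twoTorsionIndices a →
      ∀ (D N : ℕ) [NeZero D] [NeZero N] (h : 4 * D ∣ N), ¬IsSquare D →
      (D : ℤ) = (n : ℤ) ^ 2 + 4 * a → (N : ℝ) ≤ B * (n : ℝ) ^ 2 →
      (quadraticZeta (changeLevel h (jacobiCharacter D)) β).re < 0 := by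
  obtain ⟨C, hC, hzeta⟩ := exists_norm_quadraticZeta_le
  filter_upwards [eventually_re_neg_of_mem_twoTorsionIndices ha hβ hβ1 hC B]
    with n hneg htor D N _ _ h hDsq hD hN
  have hψ := isQuadratic_changeLevel (isQuadratic_jacobiCharacter (D := D)) h
  have hψ1 : changeLevel h (jacobiCharacter D) ≠ 1 :=
    (changeLevel_eq_one_iff h).not.2 (jacobiCharacter_ne_one hDsq)
  refine hneg htor D N h hD hN _ _ (entireContinuation_quadraticZeta hψ1)
    (quadraticCoeff_nonneg hψ) (isMultiplicative_quadraticCoeff _).map_one (fun k hk ↦ ?_)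
    (fun k p ↦ apply_eq_one_of_quadraticCoeff_ne_zero hψ) fun s hs ↦ ?_
  · refine (abs_quadraticCoeff_le hψ k).trans (le_self_pow₀ ?_ three_ne_zero)
    exact_mod_cast Finset.card_pos.2 ⟨1, Nat.one_mem_divisors.2 hk⟩
  · refine (hzeta N _ hψ1 s hs).trans ?_
    gcongr
    · exact_mod_cast NeZero.one_le
    · norm_num

theorem eventually_re_biquadraticZeta_neg (ha : IsUnit a) (hβ : 999 / 1000 ≤ β) (hβ1 : β < 1)
    (B : ℝ) : ∀ᶠ n : ℕ in atTop, n ∈ twoTorsionIndices a →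
      ∀ (D N : ℕ) [NeZero D] [NeZero N] (h : 4 * D ∣ N) (χ : DirichletCharacter ℤ N),
      ¬IsSquare D → (D : ℤ) = (n : ℤ) ^ 2 + 4 * a → (N : ℝ) ≤ B * (n : ℝ) ^ 2 →
      χ.IsQuadratic → χ ≠ 1 → χ * changeLevel h (jacobiCharacter D) ≠ 1 →
      (biquadraticZeta χ (changeLevel h (jacobiCharacter D)) β).re < 0 := by
  obtain ⟨C, hC, hzeta⟩ := exists_norm_biquadraticZeta_le
  filter_upwards [eventually_re_neg_of_mem_twoTorsionIndices ha hβ hβ1 hC B]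
    with n hneg htor D N _ _ h χ hDsq hD hN hχ hχ1 hχψ
  have hψ := isQuadratic_changeLevel (isQuadratic_jacobiCharacter (D := D)) h
  have hψ1 : changeLevel h (jacobiCharacter D) ≠ 1 :=
    (changeLevel_eq_one_iff h).not.2 (jacobiCharacter_ne_one hDsq)
  exact hneg htor D N h hD hN _ _ (entireContinuation_biquadraticZeta hχ1 hψ1 hχψ)
    (biquadraticCoeff_nonneg hχ hψ) (isMultiplicative_biquadraticCoeff _ _).map_one
    (fun _ ↦ abs_biquadraticCoeff_le hχ hψ) (fun _ _ ↦ apply_eq_one_of_biquadraticCoeff_ne_zero hψ)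
    (hzeta N χ _ hχ1 hψ1 hχψ)

theorem eventually_notMem_of_quadraticZeta_eq_zero (ha : IsUnit a) (hβ : 999 / 1000 ≤ β)
    (hβ1 : β < 1) {E : ℕ} [NeZero E] (hE : ¬IsSquare E)
    (hzero : quadraticZeta (jacobiCharacter E) β = 0) :
    ∀ᶠ n : ℕ in atTop, n ∉ twoTorsionIndices a := by
  filter_upwards [eventually_ge_atTop 3, eventually_re_quadraticZeta_neg ha hβ hβ1 (32 * E),
    eventually_re_biquadraticZeta_neg ha hβ hβ1 (32 * E)] with n hn hquad hbiquad htor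
  obtain ⟨D, hD0, hDsq, hD, hDn⟩ := exists_natCast_eq_of_three_le ha hn
  have : NeZero D := ⟨hD0⟩
  have hN : ((4 * E * (4 * D) : ℕ) : ℝ) ≤ 32 * E * (n : ℝ) ^ 2 := by
    push_cast
    nlinarith [E.cast_nonneg (α := ℝ)]
  have hχ0 := quadraticZeta_changeLevel_eq_zero (dvd_mul_right (4 * E) (4 * D))
    (by exact_mod_cast hβ1.ne) hzero
  rcases eq_or_ne (changeLevel (dvd_mul_right (4 * E) (4 * D)) (jacobiCharacter E) *
    changeLevel (dvd_mul_left (4 * D) (4 * E)) (jacobiCharacter D)) 1 with hone | hone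
  · have hneg := hquad htor D _ (dvd_mul_left _ _) hDsq hD hN
    rw [← eq_of_mul_eq_one_of_isQuadratic
      (isQuadratic_changeLevel isQuadratic_jacobiCharacter _) hone, hχ0] at hneg
    exact hneg.false
  · have hneg := hbiquad htor D _ (dvd_mul_left _ _) _ hDsq hD hN
      (isQuadratic_changeLevel isQuadratic_jacobiCharacter _)
      ((changeLevel_eq_one_iff _).not.2 (jacobiCharacter_ne_one hE)) hone
    rw [biquadraticZeta_eq_zero hχ0] at hneg
    exact hneg.false

theorem eventually_notMem_of_forall_re_quadraticZeta_nonneg (ha : IsUnit a)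
    (hβ : 999 / 1000 ≤ β) (hβ1 : β < 1) (h : ∀ (D : ℕ) [NeZero D], ¬IsSquare D →
      0 ≤ (quadraticZeta (jacobiCharacter D) β).re) :
    ∀ᶠ n : ℕ in atTop, n ∉ twoTorsionIndices a := by
  filter_upwards [eventually_ge_atTop 3, eventually_re_quadraticZeta_neg ha hβ hβ1 8]
    with n hn hquad htor
  obtain ⟨D, hD0, hDsq, hD, hDn⟩ := exists_natCast_eq_of_three_le ha hn
  have : NeZero D := ⟨hD0⟩
  have hneg := hquad htor D (4 * D) dvd_rfl hDsq hD (by push_cast; linarith)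
  rw [changeLevel_self] at hneg
  exact (h D hDsq).not_gt hneg

theorem finite_twoTorsionIndices (ha : IsUnit a) : (twoTorsionIndices a).Finite := by
  suffices h : ∀ᶠ n : ℕ in atTop, n ∉ twoTorsionIndices a by
    simpa [← Nat.cofinite_eq_atTop, eventually_cofinite] using h
  by_cases h : ∀ (D : ℕ) [NeZero D], ¬IsSquare D →
      0 ≤ (quadraticZeta (jacobiCharacter D) (999 / 1000 : ℝ)).re
  · exact eventually_notMem_of_forall_re_quadraticZeta_nonneg ha le_rfl (by norm_num) h
  · push Not at h
    obtain ⟨E, _, hE, hneg⟩ := h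
    obtain ⟨β, ⟨hβ, hβ1⟩, hzero⟩ := exists_quadraticZeta_eq_zero isQuadratic_jacobiCharacter
      (jacobiCharacter_ne_one hE) (by norm_num) hneg
    exact eventually_notMem_of_quadraticZeta_eq_zero ha hβ.le hβ1 hE hzero

end Siegel

/-- There are only finitely many unit-generated real quadratic orders (the orders
`O_{n²-4}` for `n ≥ 3` and `O_{n²+4}` for `n ≥ 1`) whose (wide) class group is
`2`-torsion. -/
theorem finite_unitGenerated_twoTorsion_classGroup :
    ({n : ℤ | 3 ≤ n ∧ ∀ g : ClassGroup (QOrder (n ^ 2 - 4)), g ^ 2 = 1} ∪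
      {n : ℤ | 1 ≤ n ∧ ∀ g : ClassGroup (QOrder (n ^ 2 + 4)), g ^ 2 = 1}).Finite := by
  refine Set.Finite.union ?_ ?_
  · refine ((finite_twoTorsionIndices (a := -1) (by decide)).image Nat.cast).subset ?_
    rintro n ⟨hn, htor⟩
    lift n to ℕ using by lia
    exact ⟨n, htor, rfl⟩
  · refine ((finite_twoTorsionIndices isUnit_one).image Nat.cast).subset ?_
    rintro n ⟨hn, htor⟩
    lift n to ℕ using by lia
    exact ⟨n, htor, rfl⟩
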